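/- arXiv:1512.03531 — 7 statements merged into one kernel-verified Lean document; each statement's English description precedes it below -/
import Mathlib

section
/- Let F be a field and let B be a nonzero linear subspace of the n×n matrices over F. Let s* be the maximum integer s ≥ 0 such that B has an s-shrunk subspace, and set r = n − s* (the non-commutative rank of B). Then there exists a natural number N, depending only on n, such that whenever |F| ≥ N, there exists an integer d with 1 ≤ d ≤ r + 1 and a matrix A in the (d,d)-blow-up B^{(d,d)} with rank(A) = rd. -/
open Matrix Kronecker

/-- The (k,ℓ)-blow-up of a matrix space `B ≤ M(n,F)`:
the span of all Kronecker products `A ⊗ T` with `A ∈ B` and `T ∈ M(k×ℓ,F)`. -/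
def blowUp {F : Type} [Field F] {n : ℕ} (B : Submodule F (Matrix (Fin n) (Fin n) F))
    (k ℓ : ℕ) : Submodule F (Matrix (Fin n × Fin k) (Fin n × Fin ℓ) F) :=
  Submodule.span F {M | ∃ A ∈ B, ∃ T : Matrix (Fin k) (Fin ℓ) F, M = A ⊗ₖ T}

/-- `U ≤ F^n` is an `s`-shrunk subspace of `B` if `dim B(U) ≤ dim U − s`. -/
def IsShrunkSubspace {F : Type} [Field F] {n : ℕ}
    (B : Submodule F (Matrix (Fin n) (Fin n) F)) (U : Submodule F (Fin n → F)) (s : ℕ) : Prop :=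
  Module.finrank F (Submodule.span F {v | ∃ A ∈ B, ∃ u ∈ U, v = A.mulVec u}) + s ≤
    Module.finrank F U

/-- A block matrix `M` with blocks indexed by `κ` is *twisted* with respect to an endomorphism `σ`,
a permutation `p` of `κ` and weights `w` if applying `σ` to the entries and `p` to the inner indices
amounts to conjugating by the diagonal matrix of weights. -/
def IsTwisted {P κ m n : Type*} [CommRing P] (σ : P →+* P) (p : Equiv.Perm κ) (w : κ → P)
    (M : Matrix (m × κ) (n × κ) P) : Prop :=
  ∀ i a j c, w a * σ (M (i, p a) (j, p c)) = M (i, a) (j, c) * w c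

namespace IsTwisted

variable {P κ m n l : Type*} [CommRing P] {σ : P →+* P} {p : Equiv.Perm κ} {w : κ → P}

lemma submatrix {m' n' : Type*} {M : Matrix (m × κ) (n × κ) P} (hM : IsTwisted σ p w M)
    (f : m' → m) (g : n' → n) :
    IsTwisted σ p w (M.submatrix (Prod.map f id) (Prod.map g id)) :=
  fun i a j c => hM (f i) a (g j) c

lemma sub {M N : Matrix (m × κ) (n × κ) P} (hM : IsTwisted σ p w M) (hN : IsTwisted σ p w N) :
    IsTwisted σ p w (M - N) := by
  intro i a j c
  have h₁ := hM i a j c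
  have h₂ := hN i a j c
  simp only [Matrix.sub_apply, map_sub, mul_sub, sub_mul, h₁, h₂]

lemma smul {M : Matrix (m × κ) (n × κ) P} (hM : IsTwisted σ p w M) {t : P} (ht : σ t = t) :
    IsTwisted σ p w (t • M) := by
  intro i a j c
  have h₁ := hM i a j c
  simp only [Matrix.smul_apply, smul_eq_mul, map_mul, ht]
  linear_combination t * h₁

lemma mul [Fintype κ] [Fintype n] {M : Matrix (m × κ) (n × κ) P} {N : Matrix (n × κ) (l × κ) P}
    (hM : IsTwisted σ p w M) (hN : IsTwisted σ p w N) : IsTwisted σ p w (M * N) := by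
  intro i a j c
  simp only [Matrix.mul_apply, map_sum, map_mul, Finset.mul_sum, Finset.sum_mul]
  rw [← Equiv.sum_comp ((Equiv.refl n).prodCongr p)]
  refine Finset.sum_congr rfl fun x _ => ?_
  have h₁ := hM i a x.1 x.2
  have h₂ := hN x.1 x.2 j c
  simp only [Equiv.prodCongr_apply, Prod.map, Equiv.refl_apply, Prod.mk.eta] at *
  linear_combination σ (N (x.1, p x.2) (j, p c)) * h₁ + M (i, a) x * h₂

variable [Fintype κ] [DecidableEq κ] [Fintype m] [DecidableEq m]

lemma diagonal_mul {M : Matrix (m × κ) (m × κ) P} (hM : IsTwisted σ p w M) :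
    diagonal (fun x : m × κ => w x.2) * (σ.mapMatrix M).submatrix
      ((Equiv.refl m).prodCongr p) ((Equiv.refl m).prodCongr p) =
      M * diagonal (fun x : m × κ => w x.2) := by
  ext x y
  simpa [Matrix.diagonal_mul, Matrix.mul_diagonal, Prod.map] using hM x.1 x.2 y.1 y.2

variable [IsDomain P]

lemma map_det (hw : ∀ a, w a ≠ 0) {M : Matrix (m × κ) (m × κ) P} (hM : IsTwisted σ p w M) :
    σ M.det = M.det := by
  have h := congrArg det hM.diagonal_mul
  rw [det_mul, det_mul, det_submatrix_equiv_self, ← RingHom.map_det, det_diagonal, mul_comm] at h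
  exact mul_right_cancel₀ (Finset.prod_ne_zero_iff.2 fun x _ => hw x.2) h

lemma adjugate (hw : ∀ a, w a ≠ 0) {M : Matrix (m × κ) (m × κ) P} (hM : IsTwisted σ p w M)
    (h0 : M.det ≠ 0) : IsTwisted σ p w M.adjugate := by
  have h := hM.diagonal_mul
  set e : (m × κ) ≃ (m × κ) := (Equiv.refl m).prodCongr p with he
  set W : Matrix (m × κ) (m × κ) P := diagonal (fun x : m × κ => w x.2) with hW
  set M' := (σ.mapMatrix M).submatrix e e with hM'
  have hadj : (σ.mapMatrix M.adjugate).submatrix e e = M'.adjugate := by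
    rw [hM', adjugate_submatrix_equiv_self, RingHom.map_adjugate]
  have hdet : M'.det = M.det := by
    rw [hM', det_submatrix_equiv_self, ← RingHom.map_det, hM.map_det hw]
  have key : W * M'.adjugate = M.adjugate * W := by
    have h₁ : M.adjugate * (W * M' * M'.adjugate) = M.adjugate * (M * W * M'.adjugate) := by rw [h]
    rw [Matrix.mul_assoc W, mul_adjugate, hdet, Matrix.mul_smul, Matrix.mul_one, Matrix.mul_assoc M,
      ← Matrix.mul_assoc _ M, adjugate_mul, Matrix.mul_smul, Matrix.smul_mul, Matrix.one_mul] at h₁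
    exact (smul_right_injective _ h0 h₁).symm
  intro i a j c
  have := congrFun (congrFun key (i, a)) (j, c)
  rw [← hadj] at this
  simpa [hW, he, Matrix.diagonal_mul, Matrix.mul_diagonal] using this

/-- If nonzero twisted `κ × κ` matrices are nonsingular, the rank of a twisted block matrix is
governed by its nonsingular block minors. -/
theorem exists_det_submatrix_ne_zero {m n : Type*} [Fintype n] [Nonempty κ] (hw : ∀ a, w a ≠ 0)
    (hdiv : ∀ N : Matrix (Unit × κ) (Unit × κ) P, IsTwisted σ p w N → N ≠ 0 → N.det ≠ 0)
    {M : Matrix (m × κ) (n × κ) P} (hM : IsTwisted σ p w M) :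
    ∃ (k : ℕ) (f : Fin k → m) (g : Fin k → n),
      (M.submatrix (Prod.map f id) (Prod.map g (id : κ → κ))).det ≠ 0 ∧
        M.rank ≤ k * Fintype.card κ := by
  classical
  let S : Set ℕ := {k | ∃ (f : Fin k → m) (g : Fin k → n),
    (M.submatrix (Prod.map f id) (Prod.map g (id : κ → κ))).det ≠ 0}
  have hS : S.Nonempty := ⟨0, Fin.elim0, Fin.elim0, by simp⟩
  have hbdd : BddAbove S := by
    refine ⟨M.rank, fun k ⟨f, g, h⟩ => ?_⟩
    have h₁ := rank_of_det_ne_zero h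
    have h₂ := M.rank_submatrix_le (Prod.map f (id : κ → κ)) (Prod.map g (id : κ → κ))
    rw [h₁, Fintype.card_prod, Fintype.card_fin] at h₂
    exact (Nat.le_mul_of_pos_right k Fintype.card_pos).trans h₂
  obtain ⟨k, ⟨f, g, hfg⟩, hmax⟩ : ∃ k ∈ S, ∀ k' ∈ S, k' ≤ k :=
    ⟨sSup S, Nat.sSup_mem hS hbdd, fun _ h => le_csSup hbdd h⟩
  refine ⟨k, f, g, hfg, ?_⟩
  set A := M.submatrix (Prod.map f id) (Prod.map g (id : κ → κ)) with hA
  have hAt : IsTwisted σ p w A := hM.submatrix f g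
  have hadj := hAt.adjugate hw hfg
  have hzero : ∀ i j, A.det • M.submatrix (Prod.map (fun _ : Unit => i) id)
      (Prod.map (fun _ : Unit => j) (id : κ → κ)) -
      M.submatrix (Prod.map (fun _ : Unit => i) id) (Prod.map g id) * A.adjugate *
        M.submatrix (Prod.map f id) (Prod.map (fun _ : Unit => j) id) = 0 := by
    intro i j
    set b := M.submatrix (Prod.map f id) (Prod.map (fun _ : Unit => j) (id : κ → κ)) with hb
    set c := M.submatrix (Prod.map (fun _ : Unit => i) id) (Prod.map g (id : κ → κ)) with hc
    set e := M.submatrix (Prod.map (fun _ : Unit => i) id)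
      (Prod.map (fun _ : Unit => j) (id : κ → κ)) with he
    by_contra hne
    refine hdiv _ (((hM.submatrix _ _).smul (hAt.map_det hw)).sub
      (((hM.submatrix _ _).mul hadj).mul (hM.submatrix _ _))) hne ?_
    have hbord : (fromBlocks A b c e).det = 0 := by
      by_contra hb0
      have : k + 1 ∈ S := by
        refine ⟨Fin.snoc f i, Fin.snoc g j, ?_⟩
        let ε : (Fin k × κ) ⊕ (Unit × κ) ≃ Fin (k + 1) × κ :=
          (Equiv.sumProdDistrib _ _ _).symm.trans
            (((Equiv.sumCongr (Equiv.refl _) (Equiv.ofUnique Unit (Fin 1))).trans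
              finSumFinEquiv).prodCongr (Equiv.refl κ))
        rw [← det_submatrix_equiv_self ε]
        convert hb0 using 2
        have hl : ∀ x : Fin k × κ, ε (Sum.inl x) = (x.1.castSucc, x.2) := fun x => rfl
        have hr : ∀ x : Unit × κ, ε (Sum.inr x) = (Fin.last k, x.2) := fun x => rfl
        ext (x | x) (y | y) <;> simp [hl, hr, hA, hb, hc, he, Prod.map]
      have := hmax _ this
      omega
    have h₁ : (fromBlocks A b c e) * (fromBlocks A.adjugate (-(A.adjugate * b)) 0 (A.det • 1)) =
        fromBlocks (A.det • 1) 0 (c * A.adjugate) (A.det • e - c * A.adjugate * b) := by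
      rw [fromBlocks_multiply]
      congr 1
      · simp [mul_adjugate]
      · simp [← Matrix.mul_assoc, mul_adjugate]
      · simp
      · simp [Matrix.mul_assoc]; abel
    have h₂ := congrArg det h₁
    rw [det_mul, hbord, zero_mul, det_fromBlocks_zero₁₂, eq_comm, mul_eq_zero] at h₂
    refine h₂.resolve_left ?_
    rw [det_smul, det_one, mul_one]
    exact pow_ne_zero _ hfg
  have hfac : A.det • M = M.submatrix id (Prod.map g id) * A.adjugate *
      M.submatrix (Prod.map f id) id := by
    ext ⟨i, a⟩ ⟨j, c⟩
    have := congrFun (congrFun (hzero i j) ((), a)) ((), c)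
    rw [Matrix.sub_apply, Matrix.zero_apply, sub_eq_zero] at this
    exact this
  rw [← rank_smul_of_mem_nonZeroDivisors M (mem_nonZeroDivisors_of_ne_zero hfg), hfac]
  refine (rank_mul_le_left _ _).trans ((rank_le_card_width _).trans ?_)
  simp

end IsTwisted

section CyclicDivision

open Polynomial Fin.CommRing

/-- The weights of the cyclic shift `a ↦ a + 1` on `Fin (e + 1)`: a factor `X` when it wraps. -/
noncomputable def wrapWeight (R : Type*) [CommRing R] (e : ℕ) (a : Fin (e + 1)) : R[X] :=
  if a = Fin.last e then X else 1

lemma wrapWeight_ne_zero (R : Type*) [CommRing R] [Nontrivial R] (e : ℕ) (a : Fin (e + 1)) :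
    wrapWeight R e a ≠ 0 := by
  unfold wrapWeight
  split_ifs
  · exact X_ne_zero
  · exact one_ne_zero

lemma coeff_det_of_natDegree_le {R n : Type*} [CommRing R] [Fintype n] [DecidableEq n]
    (K : Matrix n n R[X]) (ν : ℕ) (h : ∀ a c, (K a c).natDegree ≤ ν) :
    K.det.coeff (Fintype.card n * ν) = (K.map fun f => f.coeff ν).det := by
  simp only [det_apply, finsetSum_coeff, coeff_smul, Matrix.map_apply]
  refine Finset.sum_congr rfl fun π _ => ?_
  rw [← Finset.card_univ, coeff_prod_of_natDegree_le _ _ _ fun a _ => h _ _]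

variable {R : Type*} [CommRing R] [IsDomain R] {e : ℕ}

/-- A square matrix supported on a cyclic diagonal, with nonzero entries there, is nonsingular. -/
lemma det_ne_zero_of_cyclic (C : Matrix (Fin (e + 1)) (Fin (e + 1)) R) (δ : Fin (e + 1))
    (h : ∀ a c, C a c ≠ 0 ↔ c = a + δ) : C.det ≠ 0 := by
  have hd : C.submatrix id (Equiv.addRight δ) = diagonal fun a => C a (a + δ) := by
    ext a c
    by_cases hac : a = c
    · subst hac; simp
    · rw [diagonal_apply_ne _ hac]
      by_contra hne
      exact hac (add_right_cancel ((h _ _).1 hne)).symm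
  intro h0
  have h₁ := det_permute' (Equiv.addRight δ) C
  rw [h0, mul_zero, hd, det_diagonal] at h₁
  exact Finset.prod_ne_zero_iff.2 (fun a _ => (h a _).2 rfl) h₁

/-- Nonzero elements of the cyclic algebra given by the twisted matrices are nonsingular. -/
theorem IsTwisted.det_ne_zero (τ : R →+* R)
    {N : Matrix (Unit × Fin (e + 1)) (Unit × Fin (e + 1)) R[X]}
    (hN : IsTwisted (mapRingHom τ) (Equiv.addRight 1) (wrapWeight R e) N) (h0 : N ≠ 0) :
    N.det ≠ 0 := by
  let M : Matrix (Fin (e + 1)) (Fin (e + 1)) R[X] := fun a c => N ((), a) ((), c)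
  have hMdet : M.det = N.det :=
    det_submatrix_equiv_self (Equiv.punitProd (Fin (e + 1))).symm N
  have hM : ∀ a c, wrapWeight R e a * (M (a + 1) (c + 1)).map τ = M a c * wrapWeight R e c :=
    fun a c => hN () a () c
  let K : Matrix (Fin (e + 1)) (Fin (e + 1)) R[X] := fun a c =>
    expand R (e + 1) (M a c) * X ^ (c.val + (e - a.val))
  have hK : ∀ a c, K a c = (K (a + 1) (c + 1)).map τ := by
    intro a c
    have h := hM a c
    simp only [K, Polynomial.map_mul, Polynomial.map_pow, map_X, map_expand, Fin.val_add_one]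
    have ha := a.is_le
    have hc := c.is_le
    unfold wrapWeight at h
    by_cases hal : a = Fin.last e <;> by_cases hcl : c = Fin.last e
    · simp only [hal, hcl, if_true] at h ⊢
      rw [mul_comm (M _ _)] at h
      rw [mul_left_cancel₀ X_ne_zero h]
      simp
    · simp only [hal, hcl, if_true, if_false, mul_one] at h ⊢
      rw [← h, map_mul, expand_X, mul_assoc, mul_left_comm, ← pow_add]
      congr 2
      simp; omega
    · simp only [hal, hcl, if_true, if_false, one_mul] at h ⊢
      have : a.val < e := lt_of_le_of_ne ha fun h => hal (Fin.ext h)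
      rw [h, map_mul, expand_X, mul_assoc, ← pow_add]
      congr 2
      simp; omega
    · simp only [hal, hcl, if_false, one_mul, mul_one] at h ⊢
      have : a.val < e := lt_of_le_of_ne ha fun h => hal (Fin.ext h)
      rw [h]
      congr 2
      omega
  have hKne : ∃ x : Fin (e + 1) × Fin (e + 1), K x.1 x.2 ≠ 0 := by
    by_contra! hall
    refine h0 ?_
    ext1 ⟨_, a⟩ ⟨_, c⟩
    have := hall (a, c)
    simpa [K, M, expand_eq_zero] using this
  obtain ⟨x₁, hx₁⟩ := hKne
  obtain ⟨⟨a₀, c₀⟩, hmax⟩ := Finite.exists_max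
    fun x : Fin (e + 1) × Fin (e + 1) => (K x.1 x.2).degree
  have hne : K a₀ c₀ ≠ 0 := by
    intro h
    have := hmax x₁
    rw [h, degree_zero, le_bot_iff, degree_eq_bot] at this
    exact hx₁ this
  set ν := (K a₀ c₀).natDegree with hν
  have hle : ∀ a c, (K a c).natDegree ≤ ν := fun a c => natDegree_le_natDegree (hmax (a, c))
  have hC : ∀ a c, (K a c).coeff ν = τ ((K (a + 1) (c + 1)).coeff ν) := by
    intro a c
    rw [hK a c, coeff_map]
  have hC₀ : ∀ j : ℕ, (K (a₀ + j) (c₀ + j)).coeff ν ≠ 0 := by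
    intro j
    induction j with
    | zero => simpa [hν] using hne
    | succ j ih =>
      intro h
      refine ih ?_
      rw [hC, add_assoc, add_assoc]
      push_cast at h
      rw [h, map_zero]
  have hsupp : ∀ a c, (K a c).coeff ν ≠ 0 → c = a + ((ν : Fin (e + 1)) + 1) := by
    intro a c h
    simp only [K, coeff_mul_X_pow', coeff_expand (Nat.succ_pos e)] at h
    obtain ⟨hle', hdvd⟩ : c.val + (e - a.val) ≤ ν ∧ e + 1 ∣ ν - (c.val + (e - a.val)) := by
      by_contra hcon
      refine h ?_
      split_ifs <;> tauto
    obtain ⟨q, hq⟩ := hdvd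
    have ha := a.is_le
    have hnat : ν + a.val + 1 = (e + 1) * q + (e + 1) + c.val := by omega
    have := congrArg (Nat.cast : ℕ → Fin (e + 1)) hnat
    push_cast at this
    have h1 : ((e : Fin (e + 1)) + 1) = 0 := by
      have := Fin.natCast_self (e + 1)
      push_cast at this
      exact this
    rw [h1] at this
    simp only [zero_mul, zero_add] at this
    rw [← this]
    ring
  have hiff : ∀ a c, (K.map fun f => f.coeff ν) a c ≠ 0 ↔ c = a + ((ν : Fin (e + 1)) + 1) := by
    intro a c
    refine ⟨hsupp a c, fun hc => ?_⟩
    have h₀ := hsupp a₀ c₀ (by simpa using hC₀ 0)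
    have := hC₀ (a - a₀).val
    rw [Fin.cast_val_eq_self] at this
    rw [Matrix.map_apply, hc]
    convert this using 3
    · abel
    · rw [h₀]; abel
  have hdetK : K.det ≠ 0 := by
    intro h
    have h₁ := coeff_det_of_natDegree_le K ν hle
    rw [h, coeff_zero] at h₁
    exact det_ne_zero_of_cyclic _ _ hiff h₁.symm
  have hfac : K = diagonal (fun a : Fin (e + 1) => (X : R[X]) ^ (e - a.val)) *
      (expand R (e + 1)).mapMatrix M * diagonal fun c : Fin (e + 1) => (X : R[X]) ^ c.val := by
    ext1 a c
    simp only [K, Matrix.mul_diagonal, Matrix.diagonal_mul, AlgHom.mapMatrix_apply,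
      Matrix.map_apply]
    ring
  intro hdet
  refine hdetK ?_
  rw [hfac, det_mul, det_mul, ← AlgHom.map_det, hMdet, hdet]
  simp

end CyclicDivision

section Specialization

/-- A matrix of rank `k` can be compressed to the identity of size `k`. -/
lemma exists_mul_mul_eq_one_of_rank {K m n : Type*} [Field K] [Fintype m] [Fintype n]
    (A : Matrix m n K) {k : ℕ} (hk : A.rank = k) :
    ∃ (L : Matrix (Fin k) m K) (Q : Matrix n (Fin k) K), L * A * Q = 1 := by
  classical
  let b := Module.finBasisOfFinrankEq K (LinearMap.range A.mulVecLin) hk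
  obtain ⟨g, hg⟩ := A.mulVecLin.rangeRestrict.exists_rightInverse_of_surjective
    A.mulVecLin.range_rangeRestrict
  let i : (Fin k → K) →ₗ[K] (m → K) :=
    (LinearMap.range A.mulVecLin).subtype ∘ₗ b.equivFun.symm.toLinearMap
  obtain ⟨l, hl⟩ := i.exists_leftInverse_of_injective
    (LinearMap.ker_eq_bot.2 (Subtype.val_injective.comp b.equivFun.symm.injective))
  refine ⟨LinearMap.toMatrix' l, LinearMap.toMatrix' (g ∘ₗ b.equivFun.symm.toLinearMap),
    Matrix.toLin'.injective ?_⟩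
  rw [toLin'_mul, toLin'_mul, toLin'_toMatrix', toLin'_toMatrix', toLin'_one, ← hl,
    LinearMap.comp_assoc]
  congr 1
  refine LinearMap.ext fun x => ?_
  exact congrArg Subtype.val (LinearMap.congr_fun hg (b.equivFun.symm x))

/-- Specialization does not increase the rank. -/
lemma Matrix.rank_map_le_of_leftInverse {K P m n : Type*} [Field K] [CommRing P] [IsDomain P]
    [Fintype m] [Fintype n] (s : K →+* P) (φ : P →+* K) (h : φ.comp s = RingHom.id K)
    (G : Matrix m n P) :
    (G.map φ).rank ≤ G.rank := by
  classical
  obtain ⟨L, Q, hLQ⟩ := exists_mul_mul_eq_one_of_rank (G.map φ) rfl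
  have hs : ∀ x, φ (s x) = x := fun x => congrArg (fun f : K →+* K => f x) h
  have hmap : φ.mapMatrix (L.map s * G * Q.map s) = 1 := by
    rw [RingHom.mapMatrix_apply, Matrix.map_mul, Matrix.map_mul, Matrix.map_map, Matrix.map_map]
    have : (φ ∘ s : K → K) = id := funext hs
    rw [this, Matrix.map_id, Matrix.map_id, hLQ]
  have hdet : (L.map s * G * Q.map s).det ≠ 0 := by
    intro h0
    have := φ.map_det (L.map s * G * Q.map s)
    rw [hmap, h0, map_zero, det_one] at this
    exact zero_ne_one this
  have h₁ := rank_of_det_ne_zero hdet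
  rw [Fintype.card_fin] at h₁
  rw [← h₁]
  exact (rank_mul_le_left _ _).trans (rank_mul_le_right _ _)

lemma MvPolynomial.exists_eval_ne_zero {K V : Type*} [Field K] [Finite V] {D : ℕ}
    (hK : ((D + 1 : ℕ) : Cardinal) ≤ Cardinal.mk K) (q : MvPolynomial V K) (hq : q ≠ 0)
    (hD : ∀ v, q.degreeOf v ≤ D) : ∃ x : V → K, MvPolynomial.eval x q ≠ 0 := by
  obtain ⟨S, hS⟩ := Cardinal.exists_finset_eq_card hK
  by_contra! hall
  exact hq (MvPolynomial.eq_zero_of_eval_zero_at_prod_finset q (fun _ => S)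
    (fun v => by have := hD v; omega) fun x _ => hall x)

lemma MvPolynomial.degreeOf_det_le {K V n : Type*} [CommRing K] [Fintype n] [DecidableEq n]
    (M : Matrix n n (MvPolynomial V K)) (v : V) (h : ∀ i j, (M i j).degreeOf v ≤ 1) :
    M.det.degreeOf v ≤ Fintype.card n := by
  rw [det_apply']
  refine (MvPolynomial.degreeOf_sum_le _ _ _).trans (Finset.sup_le fun π _ => ?_)
  refine (MvPolynomial.degreeOf_mul_le _ _ _).trans ?_
  have h₁ : MvPolynomial.degreeOf v
      ((Equiv.Perm.sign π : ℤ) : MvPolynomial V K) = 0 := by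
    rw [← map_intCast (MvPolynomial.C (σ := V) (R := K)), MvPolynomial.degreeOf_C]
  rw [h₁, zero_add]
  refine (MvPolynomial.degreeOf_prod_le _ _ _).trans ?_
  exact (Finset.sum_le_sum fun i _ => h _ _).trans (by simp)

lemma Polynomial.natDegree_det_le {K n : Type*} [CommRing K] [Fintype n] [DecidableEq n]
    (M : Matrix n n (Polynomial K)) (h : ∀ i j, (M i j).natDegree ≤ 1) :
    M.det.natDegree ≤ Fintype.card n := by
  rw [det_apply]
  refine Polynomial.natDegree_sum_le_of_forall_le _ _ fun π _ => ?_
  refine (Polynomial.natDegree_smul_le _ _).trans ((Polynomial.natDegree_prod_le _ _).trans ?_)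
  exact (Finset.sum_le_sum fun i _ => h _ _).trans (by simp)

end Specialization

section Regularity

variable {F : Type} [Field F] {n : ℕ}

/-- All the slices of a block matrix lie in `B`; for square blocks of size `d` this describes the
`(d,d)`-blow-up of `B`. -/
def HasSlicesIn {κ κ' : Type*} (B : Submodule F (Matrix (Fin n) (Fin n) F))
    (M : Matrix (Fin n × κ) (Fin n × κ') F) : Prop :=
  ∀ a c, (Matrix.of fun i j => M (i, a) (j, c)) ∈ B

lemma HasSlicesIn.submatrix {κ κ' ι ι' : Type*} {B : Submodule F (Matrix (Fin n) (Fin n) F)}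
    {M : Matrix (Fin n × κ) (Fin n × κ') F} (hM : HasSlicesIn B M) (f : ι → κ) (g : ι' → κ') :
    HasSlicesIn B (M.submatrix (Prod.map id f) (Prod.map id g)) :=
  fun a c => hM (f a) (g c)

open Polynomial in
/-- The generic matrix of the blow-up spanned by the matrices `b l`. -/
noncomputable def genericBlowUp {ι : Type*} [Fintype ι] (b : ι → Matrix (Fin n) (Fin n) F)
    (e : ℕ) : Matrix (Fin n × Fin (e + 1)) (Fin n × Fin (e + 1))
      (MvPolynomial (ι × Fin (e + 1) × Fin (e + 1)) F)[X] :=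
  fun x y => C (∑ l, MvPolynomial.X (l, x.2, y.2) * MvPolynomial.C (b l x.1 y.1)) *
    if y.2 < x.2 then X else 1

open Polynomial in
lemma isTwisted_genericBlowUp {ι : Type*} [Fintype ι] (b : ι → Matrix (Fin n) (Fin n) F)
    (e : ℕ) :
    IsTwisted (mapRingHom (MvPolynomial.rename fun v : ι × Fin (e + 1) × Fin (e + 1) =>
      (v.1, v.2.1 - 1, v.2.2 - 1)).toRingHom) (Equiv.addRight 1)
      (wrapWeight (MvPolynomial (ι × Fin (e + 1) × Fin (e + 1)) F) e)
      (genericBlowUp b e) := by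
  intro i a j c
  simp only [genericBlowUp, Equiv.coe_addRight, map_mul, coe_mapRingHom, map_C, map_sum,
    AlgHom.toRingHom_eq_coe, RingHom.coe_coe, MvPolynomial.rename_X, MvPolynomial.rename_C,
    add_sub_cancel_right]
  rw [mul_left_comm, mul_assoc]
  congr 1
  have ha := a.is_le
  have hc := c.is_le
  have ha' : a ≠ Fin.last e → a.val < e := fun h => lt_of_le_of_ne ha fun h' => h (Fin.ext h')
  have hc' : c ≠ Fin.last e → c.val < e := fun h => lt_of_le_of_ne hc fun h' => h (Fin.ext h')
  simp only [wrapWeight, Fin.lt_def, Fin.val_add_one]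
  by_cases hal : a = Fin.last e <;> by_cases hcl : c = Fin.last e
  · simp [hal, hcl]
  · have := hc' hcl
    simp [hal, hcl, this]
  · have := ha' hal
    have h2 : ¬ e < a.val := by omega
    simp [hal, hcl, h2]
  · by_cases hlt : c.val < a.val <;> simp [hal, hcl, hlt]

/-- The regularity lemma: over a large field, some matrix of the blow-up has a nonsingular square
block submatrix whose size bounds the rank of any given matrix of the blow-up. -/
theorem HasSlicesIn.exists_det_submatrix_ne_zero
    {B : Submodule F (Matrix (Fin n) (Fin n) F)} {d : ℕ} (hd : 0 < d)
    (hF : ((n * d + 1 : ℕ) : Cardinal) ≤ Cardinal.mk F)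
    {A : Matrix (Fin n × Fin d) (Fin n × Fin d) F} (hA : HasSlicesIn B A) :
    ∃ (k : ℕ) (f g : Fin k → Fin n) (A' : Matrix (Fin n × Fin d) (Fin n × Fin d) F),
      HasSlicesIn B A' ∧ (A'.submatrix (Prod.map f id) (Prod.map g id)).det ≠ 0 ∧
        A.rank ≤ k * d := by
  obtain ⟨e, rfl⟩ : ∃ e, d = e + 1 := ⟨d - 1, by omega⟩
  let b := Module.finBasis F B
  let b' : Fin (Module.finrank F B) → Matrix (Fin n) (Fin n) F := fun l => (b l : Matrix _ _ F)
  let V := Fin (Module.finrank F B) × Fin (e + 1) × Fin (e + 1)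
  let G := genericBlowUp b' e
  let φ (t : F) (x : V → F) : Polynomial (MvPolynomial V F) →+* F :=
    Polynomial.eval₂RingHom (MvPolynomial.eval x) t
  have hφ : ∀ t x i a j c, G.map (φ t x) (i, a) (j, c) =
      (∑ l, x (l, a, c) * b' l i j) * if c < a then t else 1 := by
    intro t x i a j c
    rw [Matrix.map_apply]
    simp only [G, genericBlowUp]
    rw [map_mul]
    simp only [φ, Polynomial.coe_eval₂RingHom, Polynomial.eval₂_C]
    rw [map_sum]
    split_ifs <;> simp
  have hslices : ∀ t x, HasSlicesIn B (G.map (φ t x)) := by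
    intro t x a c
    have : (Matrix.of fun i j => G.map (φ t x) (i, a) (j, c)) =
        (if c < a then t else 1) • ∑ l, x (l, a, c) • b' l := by
      ext i j
      simp only [Matrix.of_apply, hφ, Matrix.smul_apply, Matrix.sum_apply, smul_eq_mul]
      ring
    rw [this]
    exact B.smul_mem _ (B.sum_mem fun l _ => B.smul_mem _ (b l).2)
  have hspec : G.map (φ 1 fun v => b.repr ⟨_, hA v.2.1 v.2.2⟩ v.1) = A := by
    ext ⟨i, a⟩ ⟨j, c⟩
    rw [hφ, ite_self, mul_one]
    have := congrArg Subtype.val (b.sum_repr ⟨_, hA a c⟩)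
    rw [AddSubmonoidClass.coe_finsetSum] at this
    have := congrFun (congrFun this i) j
    rw [Matrix.sum_apply] at this
    exact this
  obtain ⟨k, f, g, hdet, hrank⟩ := (isTwisted_genericBlowUp b' e).exists_det_submatrix_ne_zero
    (wrapWeight_ne_zero _ e) fun N hN h0 => hN.det_ne_zero _ h0
  rw [Fintype.card_fin] at hrank
  have hAG : A.rank ≤ G.rank := by
    rw [← hspec]
    refine rank_map_le_of_leftInverse (Polynomial.C.comp MvPolynomial.C) _ ?_ G
    ext x
    simp [φ]
  have hk : k * (e + 1) ≤ n * (e + 1) := by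
    have h₁ := rank_of_det_ne_zero hdet
    have h₂ := (G.rank_submatrix_le (Prod.map f id) (Prod.map g id)).trans G.rank_le_card_width
    rw [h₁] at h₂
    simpa using h₂
  have hF' : ((k * (e + 1) + 1 : ℕ) : Cardinal) ≤ Cardinal.mk F :=
    le_trans (by exact_mod_cast Nat.succ_le_succ hk) hF
  set Gs := G.submatrix (Prod.map f id) (Prod.map g (id : Fin (e + 1) → Fin (e + 1)))
  obtain ⟨t, ht⟩ : ∃ t : F, Gs.det.eval (MvPolynomial.C t) ≠ 0 := by
    obtain ⟨S, hS⟩ := Cardinal.exists_finset_eq_card hF'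
    by_contra! hall
    refine hdet (Polynomial.eq_zero_of_natDegree_lt_card_of_eval_eq_zero Gs.det
      (f := fun s : S => (MvPolynomial.C (s : F) : MvPolynomial V F)) ?_ (fun s => hall s) ?_)
    · exact (MvPolynomial.C_injective V F).comp Subtype.val_injective
    · refine (Polynomial.natDegree_det_le Gs fun x y => ?_).trans_lt ?_
      · simp only [Gs, G, genericBlowUp, Matrix.submatrix_apply]
        refine (Polynomial.natDegree_C_mul_le _ _).trans ?_
        split_ifs <;> simp
      · simp only [Fintype.card_prod, Fintype.card_fin, Fintype.card_coe]
        omega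
  have hmap : Gs.det.eval (MvPolynomial.C t) =
      ((Polynomial.evalRingHom (MvPolynomial.C t)).mapMatrix Gs).det := by
    rw [← RingHom.map_det, Polynomial.coe_evalRingHom]
  obtain ⟨x, hx⟩ := MvPolynomial.exists_eval_ne_zero hF' _ ht fun v => by
    rw [hmap]
    refine (MvPolynomial.degreeOf_det_le _ v fun y z => ?_).trans_eq (by simp)
    have hC : ∀ c : F, MvPolynomial.degreeOf v (MvPolynomial.C c) ≤ 0 := fun c =>
      (MvPolynomial.degreeOf_C c v).le
    have hX : ∀ u : V, MvPolynomial.degreeOf v (MvPolynomial.X u : MvPolynomial V F) ≤ 1 := by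
      intro u
      rw [MvPolynomial.degreeOf_X]
      split_ifs <;> simp
    simp only [Gs, G, genericBlowUp, RingHom.mapMatrix_apply, Matrix.map_apply,
      Matrix.submatrix_apply, Polynomial.coe_evalRingHom]
    rw [Polynomial.eval_mul, Polynomial.eval_C]
    refine (MvPolynomial.degreeOf_mul_le _ _ _).trans (add_le_add (b := 1) (d := 0) ?_ ?_)
    · refine (MvPolynomial.degreeOf_sum_le _ _ _).trans (Finset.sup_le fun l _ => ?_)
      exact (MvPolynomial.degreeOf_mul_le _ _ _).trans (add_le_add (hX _) (hC _))
    · split_ifs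
      · simp
      · simp
  refine ⟨k, f, g, G.map (φ t x), hslices t x, ?_, hAG.trans hrank⟩
  convert hx using 1
  rw [hmap, RingHom.map_det]
  congr 1
  ext y z
  simp only [Gs, φ, Matrix.submatrix_apply, Matrix.map_apply, RingHom.mapMatrix_apply,
    Polynomial.coe_eval₂RingHom, Polynomial.coe_evalRingHom]
  rw [← Polynomial.eval₂_at_apply, MvPolynomial.eval_C]

end Regularity

section ShrunkSubspaces

variable {F : Type} [Field F] {n : ℕ}

/-- The vectors of `F^n ⊗ F^κ` all of whose slices lie in `U`. -/
def blockSubmodule (U : Submodule F (Fin n → F)) (κ : Type*) :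
    Submodule F (Fin n × κ → F) where
  carrier := {v | ∀ a, (fun i => v (i, a)) ∈ U}
  add_mem' hv hw a := U.add_mem (hv a) (hw a)
  zero_mem' _ := U.zero_mem
  smul_mem' t _ hv a := U.smul_mem t (hv a)

lemma finrank_blockSubmodule (U : Submodule F (Fin n → F)) (κ : Type*) [Fintype κ] :
    Module.finrank F (blockSubmodule U κ) = Fintype.card κ * Module.finrank F U := by
  let ε : blockSubmodule U κ ≃ₗ[F] (κ → U) :=
    { toFun := fun v a => ⟨fun i => v.1 (i, a), v.2 a⟩
      invFun := fun u => ⟨fun x => (u x.2).1 x.1, fun a => (u a).2⟩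
      map_add' := fun _ _ => rfl
      map_smul' := fun _ _ => rfl
      left_inv := fun _ => rfl
      right_inv := fun _ => rfl }
  rw [ε.finrank_eq, Module.finrank_pi_fintype]
  simp

/-- The span of `B(U)`. -/
abbrev imageSpan (B : Submodule F (Matrix (Fin n) (Fin n) F)) (U : Submodule F (Fin n → F)) :
    Submodule F (Fin n → F) :=
  Submodule.span F {v | ∃ A ∈ B, ∃ u ∈ U, v = A.mulVec u}

lemma HasSlicesIn.mulVec_mem {κ κ' : Type*} [Fintype κ']
    {B : Submodule F (Matrix (Fin n) (Fin n) F)} {A : Matrix (Fin n × κ) (Fin n × κ') F}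
    (hA : HasSlicesIn B A) {U : Submodule F (Fin n → F)} {v : Fin n × κ' → F}
    (hv : v ∈ blockSubmodule U κ') : A.mulVec v ∈ blockSubmodule (imageSpan B U) κ := by
  intro a
  have : (fun i => A.mulVec v (i, a)) =
      ∑ c, (Matrix.of fun i j => A (i, a) (j, c)).mulVec fun j => v (j, c) := by
    ext i
    simp only [Matrix.mulVec, dotProduct, Finset.sum_apply, Fintype.sum_prod_type, Matrix.of_apply]
    exact Finset.sum_comm
  rw [this]
  exact Submodule.sum_mem _ fun c _ => Submodule.subset_span ⟨_, hA a c, _, hv c, rfl⟩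

lemma finrank_map_add_finrank_le {V W : Type*} [AddCommGroup V] [Module F V]
    [AddCommGroup W] [Module F W] [FiniteDimensional F V] (f : V →ₗ[F] W) (S : Submodule F V) :
    Module.finrank F (LinearMap.range f) + Module.finrank F S ≤
      Module.finrank F (S.map f) + Module.finrank F V := by
  have h₁ := f.finrank_range_add_finrank_ker
  have h₂ := (f.domRestrict S).finrank_range_add_finrank_ker
  rw [LinearMap.range_domRestrict, LinearMap.ker_domRestrict] at h₂
  have h₃ : Module.finrank F (Submodule.comap S.subtype (LinearMap.ker f)) ≤
      Module.finrank F (LinearMap.ker f) := by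
    rw [← Submodule.finrank_map_subtype_eq]
    exact Submodule.finrank_mono (Submodule.map_comap_le _ _)
  omega

/-- Shrunk subspaces bound the ranks in the blow-ups. -/
lemma HasSlicesIn.rank_add_le {κ : Type*} [Fintype κ]
    {B : Submodule F (Matrix (Fin n) (Fin n) F)} {A : Matrix (Fin n × κ) (Fin n × κ) F}
    (hA : HasSlicesIn B A) {U : Submodule F (Fin n → F)} {s : ℕ} (hU : IsShrunkSubspace B U s) :
    A.rank + s * Fintype.card κ ≤ n * Fintype.card κ := by
  have h₁ := finrank_map_add_finrank_le A.mulVecLin (blockSubmodule U κ)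
  have h₂ : (blockSubmodule U κ).map A.mulVecLin ≤ blockSubmodule (imageSpan B U) κ := by
    rintro _ ⟨v, hv, rfl⟩
    exact hA.mulVec_mem hv
  have h₃ := Submodule.finrank_mono h₂
  rw [finrank_blockSubmodule] at h₁ h₃
  have h₄ : Module.finrank F (imageSpan B U) + s ≤ Module.finrank F U := hU
  have h₅ := Nat.mul_le_mul_left (Fintype.card κ) h₄
  have h₆ : Module.finrank F (Fin n × κ → F) = n * Fintype.card κ := by simp
  have h₇ : A.rank = Module.finrank F (LinearMap.range A.mulVecLin) := rfl
  rw [h₆, ← h₇] at h₁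
  nlinarith

lemma HasSlicesIn.mem_blowUp {B : Submodule F (Matrix (Fin n) (Fin n) F)} {k l : ℕ}
    {A : Matrix (Fin n × Fin k) (Fin n × Fin l) F} (hA : HasSlicesIn B A) : A ∈ blowUp B k l := by
  have : A = ∑ a, ∑ c, (Matrix.of fun i j => A (i, a) (j, c)) ⊗ₖ Matrix.single a c (1 : F) := by
    ext ⟨i, a⟩ ⟨j, c⟩
    simp only [Matrix.sum_apply, kroneckerMap_apply, Matrix.of_apply, Matrix.single_apply]
    rw [Finset.sum_eq_single a, Finset.sum_eq_single c] <;> simp +contextual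
  rw [this]
  exact Submodule.sum_mem _ fun a _ => Submodule.sum_mem _ fun c _ =>
    Submodule.subset_span ⟨_, hA a c, _, rfl⟩

end ShrunkSubspaces

section Deletion

lemma Matrix.rank_le_rank_submatrix_cols_add {K m n n₀ n₁ : Type*} [Field K] [Fintype m]
    [Fintype n] [Fintype n₀] [Fintype n₁] (M : Matrix m n K) (g : n₀ → n) (g' : n₁ → n)
    (h : ∀ y, y ∈ Set.range g ∨ y ∈ Set.range g') :
    M.rank ≤ (M.submatrix id g).rank + Fintype.card n₁ := by
  have h₁ : Submodule.span K (Set.range M.col) ≤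
      Submodule.span K (Set.range (M.submatrix id g).col) ⊔
        Submodule.span K (Set.range (M.submatrix id g').col) := by
    rw [Submodule.span_le]
    rintro _ ⟨y, rfl⟩
    rcases h y with ⟨z, rfl⟩ | ⟨z, rfl⟩
    · exact Submodule.mem_sup_left (Submodule.subset_span ⟨z, rfl⟩)
    · exact Submodule.mem_sup_right (Submodule.subset_span ⟨z, rfl⟩)
  have h₂ := (Submodule.finrank_mono h₁).trans (Submodule.finrank_add_le_finrank_add_finrank _ _)
  rw [← rank_eq_finrank_span_cols, ← rank_eq_finrank_span_cols, ← rank_eq_finrank_span_cols] at h₂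
  exact h₂.trans (Nat.add_le_add_left (rank_le_card_width _) _)

lemma Matrix.rank_le_rank_submatrix_rows_add {K m n m₀ m₁ : Type*} [Field K] [Fintype m]
    [Fintype n] [Fintype m₀] [Fintype m₁] (M : Matrix m n K) (f : m₀ → m) (f' : m₁ → m)
    (h : ∀ x, x ∈ Set.range f ∨ x ∈ Set.range f') :
    M.rank ≤ (M.submatrix f id).rank + Fintype.card m₁ := by
  rw [← M.rank_transpose, ← (M.submatrix f id).rank_transpose, transpose_submatrix]
  exact Mᵀ.rank_le_rank_submatrix_cols_add f f' h

/-- Deleting the last index of every block lowers the rank by at most twice the number of blocks. -/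
lemma Matrix.rank_le_rank_submatrix_castSucc_add {K : Type*} [Field K] {r d : ℕ}
    (M : Matrix (Fin r × Fin (d + 1)) (Fin r × Fin (d + 1)) K) :
    M.rank ≤ (M.submatrix (Prod.map id Fin.castSucc) (Prod.map id Fin.castSucc)).rank + 2 * r := by
  have h : ∀ y : Fin r × Fin (d + 1), y ∈ Set.range (Prod.map (id : Fin r → Fin r) Fin.castSucc) ∨
      y ∈ Set.range fun i : Fin r => (i, Fin.last d) := by
    rintro ⟨i, a⟩
    induction a using Fin.lastCases with
    | last => exact Or.inr ⟨i, rfl⟩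
    | cast a => exact Or.inl ⟨(i, a), rfl⟩
  have h₁ := M.rank_le_rank_submatrix_cols_add _ _ h
  have h₂ := (M.submatrix id (Prod.map id Fin.castSucc)).rank_le_rank_submatrix_rows_add _ _ h
  rw [submatrix_submatrix] at h₂
  simp only [Fintype.card_fin, Function.id_comp, Function.comp_id] at h₁ h₂
  omega

end Deletion

section Chains

variable {K V : Type*} [Field K] [AddCommGroup V] [Module K V]

/-- The sequences `w` of length `L + 1` with `f (w 0) = 0` and `f (w (i + 1)) = X i (w i)`. -/
def chainSpace (f : V →ₗ[K] V) (X : ℕ → V →ₗ[K] V) (L : ℕ) : Submodule K (Fin (L + 1) → V) where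
  carrier := {w | f (w 0) = 0 ∧ ∀ i : Fin L, f (w i.succ) = X i (w i.castSucc)}
  add_mem' := fun {u v} hu hv =>
    ⟨by simp [hu.1, hv.1], fun i => by simp [hu.2 i, hv.2 i]⟩
  zero_mem' := ⟨by simp, fun i => by simp⟩
  smul_mem' := fun t {u} hu => ⟨by simp [hu.1], fun i => by simp [hu.2 i]⟩

/-- The first term of a chain. -/
def chainStart (f : V →ₗ[K] V) (X : ℕ → V →ₗ[K] V) (L : ℕ) : chainSpace f X L →ₗ[K] V :=
  LinearMap.proj 0 ∘ₗ (chainSpace f X L).subtype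

lemma range_chainStart_le (f : V →ₗ[K] V) (X : ℕ → V →ₗ[K] V) (L : ℕ) :
    LinearMap.range (chainStart f X L) ≤ LinearMap.ker f := by
  rintro _ ⟨w, rfl⟩
  exact w.2.1

lemma finrank_chainSpace_le [FiniteDimensional K V] (f : V →ₗ[K] V) (X : ℕ → V →ₗ[K] V) (L : ℕ) :
    Module.finrank K (chainSpace f X L) ≤
      Module.finrank K (LinearMap.range (chainStart f X L)) +
        L * Module.finrank K (LinearMap.ker f) := by
  rw [← (chainStart f X L).finrank_range_add_finrank_ker]
  refine Nat.add_le_add_left ?_ _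
  induction L generalizing X with
  | zero =>
    have : LinearMap.ker (chainStart f X 0) = ⊥ := by
      refine LinearMap.ker_eq_bot'.2 fun w hw => ?_
      ext i
      rw [Fin.fin_one_eq_zero i]
      exact hw
    simp [this]
  | succ L ih =>
    let X' : ℕ → V →ₗ[K] V := fun i => X (i + 1)
    let τ : LinearMap.ker (chainStart f X (L + 1)) →ₗ[K] chainSpace f X' L :=
      { toFun := fun w => ⟨fun i => w.1.1 i.succ, by
          have h : w.1.1 0 = 0 := w.2
          have := w.1.2.2 0
          simpa [h] using this, fun i => w.1.2.2 i.succ⟩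
        map_add' := fun _ _ => rfl
        map_smul' := fun _ _ => rfl }
    have hτ : Function.Injective τ := by
      intro u v huv
      ext i
      have hu : u.1.1 0 = 0 := u.2
      have hv : v.1.1 0 = 0 := v.2
      refine Fin.cases (hu.trans hv.symm) (fun i => ?_) i
      exact congrFun (congrArg Subtype.val huv) i
    have h₁ := LinearMap.finrank_le_finrank_of_injective hτ
    have h₂ := ih X'
    have h₃ := (chainStart f X' L).finrank_range_add_finrank_ker
    have h₄ := Submodule.finrank_mono (range_chainStart_le f X' L)
    rw [Nat.succ_mul]
    omega

/-- When the chains are as numerous as possible, every kernel vector starts one. -/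
lemma exists_chain_of_le_finrank [FiniteDimensional K V] {f : V →ₗ[K] V} {X : ℕ → V →ₗ[K] V}
    {L : ℕ} (h : (L + 1) * Module.finrank K (LinearMap.ker f) ≤
      Module.finrank K (chainSpace f X L)) {v : V} (hv : f v = 0) :
    ∃ w : ℕ → V, w 0 = v ∧ ∀ i < L, f (w (i + 1)) = X i (w i) := by
  have h₁ := finrank_chainSpace_le f X L
  have h₂ : LinearMap.range (chainStart f X L) = LinearMap.ker f :=
    Submodule.eq_of_le_of_finrank_le (range_chainStart_le f X L) (by rw [Nat.succ_mul] at h; omega)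
  have hv' : v ∈ LinearMap.range (chainStart f X L) := h₂ ▸ hv
  obtain ⟨w, rfl⟩ := hv'
  refine ⟨fun i => w.1 (Fin.ofNat (L + 1) i), rfl, fun i hi => ?_⟩
  have h₃ : Fin.ofNat (L + 1) (i + 1) = Fin.succ (⟨i, hi⟩ : Fin L) := by
    ext
    simp [Fin.ofNat, Nat.mod_eq_of_lt (Nat.succ_lt_succ hi)]
  have h₄ : Fin.ofNat (L + 1) i = Fin.castSucc (⟨i, hi⟩ : Fin L) := by
    ext
    simp [Fin.ofNat, Nat.mod_eq_of_lt (hi.trans (Nat.lt_succ_self L))]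
  simp only [h₃, h₄]
  exact w.2.2 ⟨i, hi⟩

/-- `x` is the last term of a chain with `j` steps taken from `𝒳`. -/
def IsChainEnd (f : V →ₗ[K] V) (𝒳 : Set (V →ₗ[K] V)) (j : ℕ) (x : V) : Prop :=
  ∃ X : ℕ → V →ₗ[K] V, (∀ i, X i ∈ 𝒳) ∧ ∃ w : ℕ → V,
    f (w 0) = 0 ∧ (∀ i < j, f (w (i + 1)) = X i (w i)) ∧ w j = x

variable {f : V →ₗ[K] V} {𝒳 : Set (V →ₗ[K] V)}

lemma IsChainEnd.extend {j : ℕ} {x y : V} (hx : IsChainEnd f 𝒳 j x) {Y : V →ₗ[K] V}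
    (hY : Y ∈ 𝒳) (hy : f y = Y x) : IsChainEnd f 𝒳 (j + 1) y := by
  obtain ⟨X, hX, w, hw₀, hw, rfl⟩ := hx
  refine ⟨fun i => if i < j then X i else Y, fun i => ?_,
    fun i => if i ≤ j then w i else y, by simpa using hw₀, fun i hi => ?_, by simp⟩
  · dsimp only
    split_ifs
    exacts [hX i, hY]
  · rcases Nat.lt_succ_iff_lt_or_eq.1 hi with hi | rfl
    · simp [hi, Nat.succ_le_of_lt hi, hi.le, hw i hi]
    · simp [hy]

lemma IsChainEnd.succ {j : ℕ} {x : V} (hx : IsChainEnd f 𝒳 j x) : IsChainEnd f 𝒳 (j + 1) x := by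
  obtain ⟨X, hX, w, hw₀, hw, rfl⟩ := hx
  refine ⟨fun i => X (i - 1), fun i => hX _, fun i => if i = 0 then 0 else w (i - 1), by simp,
    fun i hi => ?_, by simp⟩
  rcases i with _ | i
  · simpa using hw₀
  · simpa using hw i (Nat.lt_of_succ_lt_succ hi)

/-- If every kernel vector starts a chain of length `L` with any prescribed steps, then every
chain with fewer than `L` steps can be extended by any step. -/
lemma IsChainEnd.exists_eq {L : ℕ}
    (H : ∀ X : ℕ → V →ₗ[K] V, (∀ i, X i ∈ 𝒳) → ∀ v, f v = 0 →
      ∃ w : ℕ → V, w 0 = v ∧ ∀ i < L, f (w (i + 1)) = X i (w i))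
    {j : ℕ} (hj : j < L) {x : V} (hx : IsChainEnd f 𝒳 j x) {Y : V →ₗ[K] V} (hY : Y ∈ 𝒳) :
    ∃ y, f y = Y x := by
  induction j generalizing x with
  | zero =>
    obtain ⟨-, -, w, hw₀, -, rfl⟩ := hx
    obtain ⟨w', h₀, h⟩ := H (fun _ => Y) (fun _ => hY) _ hw₀
    exact ⟨w' 1, by rw [← h₀]; exact h 0 hj⟩
  | succ j ih =>
    obtain ⟨X, hX, w, hw₀, hw, rfl⟩ := hx
    obtain ⟨w', h₀, h⟩ := H (fun i => if i < j + 1 then X i else Y)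
      (fun i => by split_ifs; exacts [hX i, hY]) _ hw₀
    obtain ⟨y, hy⟩ := ih (Nat.lt_of_succ_lt hj) (x := w (j + 1) - w' (j + 1))
      ⟨fun i => X (i + 1), fun i => hX _, fun i => w (i + 1) - w' (i + 1), by
        have := h 0 (by omega)
        simp only [Nat.succ_pos, if_true] at this
        rw [map_sub, hw 0 (Nat.succ_pos j), this, h₀, sub_self], fun i hi => by
        have := h (i + 1) (by omega)
        rw [if_pos (by omega)] at this
        rw [map_sub, map_sub, hw (i + 1) (by omega), this], rfl⟩
    have h₁ := h (j + 1) hj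
    rw [if_neg (lt_irrefl _)] at h₁
    exact ⟨y + w' (j + 1 + 1), by rw [map_add, hy, h₁, map_sub, sub_add_cancel]⟩

lemma exists_eq_succ_of_monotone [FiniteDimensional K V] {W : ℕ → Submodule K V}
    (hW : ∀ j, W j ≤ W (j + 1)) : ∃ j ≤ Module.finrank K V, W j = W (j + 1) := by
  by_contra! h
  have h₁ : ∀ j ≤ Module.finrank K V + 1, j ≤ Module.finrank K (W j) := by
    intro j hj
    induction j with
    | zero => exact Nat.zero_le _
    | succ j ih =>
      have h₂ := Submodule.finrank_lt_finrank_of_lt ((hW j).lt_of_ne (h j (by omega)))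
      have h₃ := ih (by omega)
      omega
  have h₂ := h₁ _ le_rfl
  have h₃ := Submodule.finrank_le (W (Module.finrank K V + 1))
  omega

/-- If no step obstructs the chains, their last terms span a subspace that is shrunk by `𝒳`. -/
theorem exists_finrank_span_add_le [FiniteDimensional K V] (h𝒳 : 𝒳.Nonempty)
    (H : ∀ X : ℕ → V →ₗ[K] V, (∀ i, X i ∈ 𝒳) → ∀ v, f v = 0 →
      ∃ w : ℕ → V, w 0 = v ∧ ∀ i < Module.finrank K V + 1, f (w (i + 1)) = X i (w i)) :
    ∃ S : Submodule K V, Module.finrank K (Submodule.span K {y | ∃ Y ∈ 𝒳, ∃ x ∈ S, y = Y x}) +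
      Module.finrank K (LinearMap.ker f) ≤ Module.finrank K S := by
  obtain ⟨Z, hZ⟩ := h𝒳
  let W : ℕ → Submodule K V := fun j => Submodule.span K {x | IsChainEnd f 𝒳 j x}
  have hmono : ∀ j, W j ≤ W (j + 1) := fun j => Submodule.span_mono fun x hx => hx.succ
  obtain ⟨j, hj, hjW⟩ := exists_eq_succ_of_monotone hmono
  have hker : LinearMap.ker f ≤ W j := by
    refine le_trans (fun v hv => Submodule.subset_span ?_) (monotone_nat_of_le_succ hmono j.zero_le)
    exact ⟨fun _ => Z, fun _ => hZ, fun _ => v, hv, fun i hi => absurd hi (Nat.not_lt_zero i), rfl⟩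
  refine ⟨W j, ?_⟩
  have himage : Submodule.span K {y | ∃ Y ∈ 𝒳, ∃ x ∈ W j, y = Y x} ≤ (W j).map f := by
    rw [Submodule.span_le]
    rintro _ ⟨Y, hY, x, hx, rfl⟩
    have : W j ≤ ((W j).map f).comap Y := by
      refine Submodule.span_le.2 fun x hx => ?_
      obtain ⟨y, hy⟩ := IsChainEnd.exists_eq H (Nat.lt_succ_of_le hj) hx hY
      refine ⟨y, ?_, hy⟩
      rw [hjW]
      exact Submodule.subset_span (IsChainEnd.extend hx hY hy)
    exact this hx
  have h₁ := Submodule.finrank_mono himage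
  have h₂ := (f.domRestrict (W j)).finrank_range_add_finrank_ker
  rw [LinearMap.range_domRestrict, LinearMap.ker_domRestrict,
    (Submodule.comapSubtypeEquivOfLe hker).finrank_eq] at h₂
  omega

end Chains

section WongSequence

variable {F : Type} [Field F] {n d : ℕ}

/-- The block bidiagonal matrix whose kernel consists of the chains for `A` with steps `X`. -/
def chainMatrix (A : Matrix (Fin n × Fin d) (Fin n × Fin d) F)
    (X : ℕ → Matrix (Fin n × Fin d) (Fin n × Fin d) F) (L : ℕ) :
    Matrix (Fin n × (Fin d × Fin (L + 1))) (Fin n × (Fin d × Fin (L + 1))) F :=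
  Matrix.of fun x y => (if x.2.2 = y.2.2 then A (x.1, x.2.1) (y.1, y.2.1) else 0) -
    if (x.2.2 : ℕ) = y.2.2 + 1 then X y.2.2 (x.1, x.2.1) (y.1, y.2.1) else 0

lemma hasSlicesIn_chainMatrix {B : Submodule F (Matrix (Fin n) (Fin n) F)}
    {A : Matrix (Fin n × Fin d) (Fin n × Fin d) F} (hA : HasSlicesIn B A)
    {X : ℕ → Matrix (Fin n × Fin d) (Fin n × Fin d) F} (hX : ∀ i, HasSlicesIn B (X i)) (L : ℕ) :
    HasSlicesIn B (chainMatrix A X L) := by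
  rintro ⟨a, p⟩ ⟨c, q⟩
  have : (Matrix.of fun i j => chainMatrix A X L (i, (a, p)) (j, (c, q))) =
      (if p = q then Matrix.of fun i j => A (i, a) (j, c) else 0) -
        if (p : ℕ) = q + 1 then Matrix.of fun i j => X q (i, a) (j, c) else 0 := by
    ext i j
    simp only [chainMatrix, Matrix.of_apply, Matrix.sub_apply]
    split_ifs <;> rfl
  rw [this]
  refine B.sub_mem ?_ ?_
  · split_ifs
    exacts [hA a c, B.zero_mem]
  · split_ifs
    exacts [hX q a c, B.zero_mem]

lemma chainMatrix_mulVec (A : Matrix (Fin n × Fin d) (Fin n × Fin d) F)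
    (X : ℕ → Matrix (Fin n × Fin d) (Fin n × Fin d) F) (L : ℕ)
    (w : Fin n × (Fin d × Fin (L + 1)) → F) (i : Fin n) (a : Fin d) (p : Fin (L + 1)) :
    (chainMatrix A X L).mulVec w (i, (a, p)) =
      A.mulVec (fun y => w (y.1, (y.2, p))) (i, a) -
        ∑ q : Fin (L + 1), if (p : ℕ) = q + 1 then
          (X q).mulVec (fun y => w (y.1, (y.2, q))) (i, a) else 0 := by
  have h₁ : A.mulVec (fun y => w (y.1, (y.2, p))) (i, a) =
      ∑ q : Fin (L + 1), if p = q then A.mulVec (fun y => w (y.1, (y.2, q))) (i, a) else 0 := by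
    simp
  rw [h₁, ← Finset.sum_sub_distrib]
  simp only [Matrix.mulVec, dotProduct, Fintype.sum_prod_type, chainMatrix, Matrix.of_apply]
  rw [Finset.sum_congr rfl fun j _ => Finset.sum_comm, Finset.sum_comm]
  refine Finset.sum_congr rfl fun q _ => ?_
  split_ifs <;> simp [sub_mul, Finset.sum_sub_distrib]

lemma finrank_ker_chainMatrix_le (A : Matrix (Fin n × Fin d) (Fin n × Fin d) F)
    (X : ℕ → Matrix (Fin n × Fin d) (Fin n × Fin d) F) (L : ℕ) :
    Module.finrank F (LinearMap.ker (chainMatrix A X L).mulVecLin) ≤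
      Module.finrank F (chainSpace A.mulVecLin (fun i => (X i).mulVecLin) L) := by
  let ε : (LinearMap.ker (chainMatrix A X L).mulVecLin) →ₗ[F]
      (chainSpace A.mulVecLin (fun i => (X i).mulVecLin) L) :=
    { toFun := fun w => ⟨fun p x => w.1 (x.1, (x.2, p)), by
        have hw : ∀ i a p, (chainMatrix A X L).mulVec w.1 (i, (a, p)) = 0 := fun i a p =>
          congrFun w.2 (i, (a, p))
        simp only [chainMatrix_mulVec] at hw
        constructor
        · ext ⟨i, a⟩
          have := hw i a 0
          simpa using this
        · intro q
          ext ⟨i, a⟩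
          have := hw i a q.succ
          rw [Finset.sum_eq_single q.castSucc] at this
          · simpa [sub_eq_zero] using this
          · intro q' _ hq'
            refine if_neg fun h => hq' ?_
            ext
            simpa using h.symm
          · simp⟩
      map_add' := fun _ _ => rfl
      map_smul' := fun _ _ => rfl }
  refine LinearMap.finrank_le_finrank_of_injective (f := ε) fun u v huv => ?_
  ext ⟨i, a, p⟩
  exact congrFun (congrFun (congrArg Subtype.val huv) p) (i, a)

/-- If the rank of `A` relative to its size is not exceeded in a sufficiently large blow-up,
then there is a shrunk subspace certifying that it is maximal. -/
theorem HasSlicesIn.exists_isShrunkSubspace {B : Submodule F (Matrix (Fin n) (Fin n) F)}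
    (hd : 0 < d) {A : Matrix (Fin n × Fin d) (Fin n × Fin d) F} (hA : HasSlicesIn B A)
    (H : ∀ M : Matrix (Fin n × (Fin d × Fin (n * d + 2))) (Fin n × (Fin d × Fin (n * d + 2))) F,
      HasSlicesIn B M → M.rank ≤ (n * d + 2) * A.rank) :
    ∃ (U : Submodule F (Fin n → F)) (s : ℕ), IsShrunkSubspace B U s ∧ n * d ≤ A.rank + s * d := by
  have hV : Module.finrank F (Fin n × Fin d → F) = n * d := by simp
  have hrank : A.rank + Module.finrank F (LinearMap.ker A.mulVecLin) = n * d :=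
    hV ▸ A.mulVecLin.finrank_range_add_finrank_ker
  let 𝒳 : Set ((Fin n × Fin d → F) →ₗ[F] (Fin n × Fin d → F)) :=
    {Y | ∃ X, HasSlicesIn B X ∧ Y = X.mulVecLin}
  obtain ⟨S, hS⟩ := exists_finrank_span_add_le (f := A.mulVecLin) (𝒳 := 𝒳) ⟨_, A, hA, rfl⟩ <| by
    intro Y hY v hv
    choose X hX hXY using hY
    obtain rfl : Y = fun i => (X i).mulVecLin := funext hXY
    rw [hV]
    refine exists_chain_of_le_finrank (le_trans ?_ (finrank_ker_chainMatrix_le A X _)) hv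
    have h₁ := H _ (hasSlicesIn_chainMatrix hA hX (n * d + 1))
    have h₂ := (chainMatrix A X (n * d + 1)).mulVecLin.finrank_range_add_finrank_ker
    have h₃ : Module.finrank F (Fin n × (Fin d × Fin (n * d + 1 + 1)) → F) =
        (n * d + 2) * (n * d) := by
      simp only [Module.finrank_fintype_fun_eq_card, Fintype.card_prod, Fintype.card_fin]
      ring
    have h₄ : (chainMatrix A X (n * d + 1)).rank = Module.finrank F
      (LinearMap.range (chainMatrix A X (n * d + 1)).mulVecLin) := rfl
    have h₅ := congrArg ((n * d + 2) * ·) hrank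
    simp only [mul_add (n * d + 2)] at h₅
    rw [h₃, ← h₄] at h₂
    change (n * d + 2) * _ ≤ _
    omega
  let U : Submodule F (Fin n → F) := Submodule.span F {u | ∃ v ∈ S, ∃ a, u = fun i => v (i, a)}
  have hSU : S ≤ blockSubmodule U (Fin d) := fun v hv a => Submodule.subset_span ⟨v, hv, a, rfl⟩
  let E : Fin d → Fin d → Matrix (Fin n) (Fin n) F →
      Matrix (Fin n × Fin d) (Fin n × Fin d) F := fun a c M =>
    Matrix.of fun x y => if x.2 = a ∧ y.2 = c then M x.1 y.1 else 0
  have hE : ∀ a c, ∀ M ∈ B, HasSlicesIn B (E a c M) := by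
    intro a c M hM a' c'
    by_cases h : a' = a ∧ c' = c
    · convert hM
      ext i j
      simp [E, h]
    · convert B.zero_mem
      ext i j
      simp only [E, Matrix.of_apply, if_neg h, Matrix.zero_apply]
  have hEv : ∀ a c M (v : Fin n × Fin d → F), (E a c M).mulVec v =
      fun x => if x.2 = a then M.mulVec (fun j => v (j, c)) x.1 else 0 := by
    intro a c M v
    ext ⟨i, b⟩
    by_cases h : b = a <;>
      simp [E, Matrix.mulVec, dotProduct, Fintype.sum_prod_type, h]
  let P : Submodule F (Fin n × Fin d → F) :=
    Submodule.span F {y | ∃ Y ∈ 𝒳, ∃ x ∈ S, y = Y x}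
  let ι : Fin d → (Fin n → F) →ₗ[F] (Fin n × Fin d → F) := fun a =>
    { toFun := fun u x => if x.2 = a then u x.1 else 0
      map_add' := fun u v => by ext x; simp only [Pi.add_apply]; split_ifs <;> simp
      map_smul' := fun t u => by ext x; simp }
  have hι : ∀ a, imageSpan B U ≤ P.comap (ι a) := by
    intro a
    refine Submodule.span_le.2 ?_
    rintro _ ⟨M, hM, u, hu, rfl⟩
    have : U ≤ P.comap (ι a ∘ₗ M.mulVecLin) := by
      refine Submodule.span_le.2 ?_
      rintro _ ⟨v, hv, c, rfl⟩
      exact Submodule.subset_span ⟨_, ⟨_, hE a c M hM, rfl⟩, v, hv, (hEv a c M v).symm⟩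
    exact this hu
  have hP : blockSubmodule (imageSpan B U) (Fin d) ≤ P := by
    intro v hv
    have : v = ∑ a, ι a fun i => v (i, a) := by
      ext ⟨i, b⟩
      simp [ι, Finset.sum_apply]
    rw [this]
    exact Submodule.sum_mem _ fun a _ => hι a (hv a)
  have h₁ := Submodule.finrank_mono hSU
  have h₂ := Submodule.finrank_mono hP
  rw [finrank_blockSubmodule, Fintype.card_fin] at h₁ h₂
  have h₃ : d * Module.finrank F (imageSpan B U) + Module.finrank F (LinearMap.ker A.mulVecLin) ≤
      d * Module.finrank F U := le_trans (Nat.add_le_add_right h₂ _) (hS.trans h₁)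
  have h₄ : Module.finrank F (imageSpan B U) ≤ Module.finrank F U :=
    Nat.le_of_mul_le_mul_left ((Nat.le_add_right _ _).trans h₃) hd
  obtain ⟨s, hs⟩ := Nat.exists_eq_add_of_le h₄
  refine ⟨U, s, hs.ge, ?_⟩
  rw [hs] at h₃
  nlinarith

end WongSequence

section MaximalRank

variable {F : Type} [Field F] {n : ℕ} {B : Submodule F (Matrix (Fin n) (Fin n) F)}

/-- Rounding up the rank of a matrix in a blow-up to a multiple of the blow-up size. -/
lemma HasSlicesIn.exists_rank_ge {d : ℕ} (hd : 0 < d)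
    (hF : ((n * d + 1 : ℕ) : Cardinal) ≤ Cardinal.mk F)
    {A : Matrix (Fin n × Fin d) (Fin n × Fin d) F} (hA : HasSlicesIn B A) {k : ℕ}
    (hk : k * d < A.rank + d) :
    ∃ A' : Matrix (Fin n × Fin d) (Fin n × Fin d) F, HasSlicesIn B A' ∧ k * d ≤ A'.rank := by
  obtain ⟨l, f, g, A', hA', hdet, hl⟩ := hA.exists_det_submatrix_ne_zero hd hF
  refine ⟨A', hA', ?_⟩
  have h₁ := rank_of_det_ne_zero hdet
  have h₂ := A'.rank_submatrix_le (Prod.map f id) (Prod.map g id)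
  rw [h₁, Fintype.card_prod, Fintype.card_fin, Fintype.card_fin] at h₂
  refine le_trans (Nat.mul_le_mul_right d ?_) h₂
  have h₃ : k * d < (l + 1) * d := by rw [Nat.succ_mul]; omega
  exact Nat.lt_succ_iff.1 (lt_of_mul_lt_mul_right h₃ d.zero_le)

/-- A bound for the size of a blow-up in which a given non-commutative rank is attained. -/
def sizeBound (n : ℕ) : ℕ → ℕ
  | 0 => 1
  | k + 1 => sizeBound n k * (n * sizeBound n k + 2)

lemma sizeBound_mono (n : ℕ) : Monotone (sizeBound n) :=
  monotone_nat_of_le_succ fun _ => Nat.le_mul_of_pos_right _ (Nat.succ_pos _)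

lemma exists_rank_ge_of_le {s r : ℕ}
    (hs : ∀ U s', IsShrunkSubspace B U s' → s' ≤ s) (hr : r + s = n)
    (hF : ((n * sizeBound n n + 1 : ℕ) : Cardinal) ≤ Cardinal.mk F) {k : ℕ} (hk : k ≤ r) :
    ∃ d, 0 < d ∧ d ≤ sizeBound n k ∧ ∃ A : Matrix (Fin n × Fin d) (Fin n × Fin d) F,
      HasSlicesIn B A ∧ k * d ≤ A.rank := by
  induction k with
  | zero => exact ⟨1, one_pos, le_rfl, 0, fun _ _ => B.zero_mem, by simp⟩
  | succ k ih =>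
    obtain ⟨d, hd, hdk, A, hA, hrank⟩ := ih (Nat.le_of_succ_le hk)
    by_cases H : ∀ M : Matrix (Fin n × (Fin d × Fin (n * d + 2)))
      (Fin n × (Fin d × Fin (n * d + 2))) F, HasSlicesIn B M → M.rank ≤ (n * d + 2) * A.rank
    · obtain ⟨U, s', hU, h⟩ := hA.exists_isShrunkSubspace hd H
      refine ⟨d, hd, hdk.trans (sizeBound_mono n k.le_succ), A, hA, ?_⟩
      have h₁ := Nat.mul_le_mul_right d (hs U s' hU)
      have h₂ := Nat.mul_le_mul_right d hk
      have h₃ : r * d + s * d = n * d := by rw [← add_mul, hr]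
      omega
    · push Not at H
      obtain ⟨M, hM, hMrank⟩ := H
      have hpos : 0 < d * (n * d + 2) := Nat.mul_pos hd (Nat.succ_pos _)
      have hle : d * (n * d + 2) ≤ sizeBound n (k + 1) :=
        Nat.mul_le_mul hdk (Nat.add_le_add_right (Nat.mul_le_mul_left n hdk) 2)
      refine ⟨_, hpos, hle, ?_⟩
      let ε : Fin n × Fin (d * (n * d + 2)) ≃ Fin n × (Fin d × Fin (n * d + 2)) :=
        (Equiv.refl _).prodCongr finProdFinEquiv.symm
      have hM' : HasSlicesIn B (M.submatrix ε ε) := hM.submatrix _ _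
      refine hM'.exists_rank_ge hpos (le_trans ?_ hF) ?_
      · exact_mod_cast Nat.succ_le_succ (Nat.mul_le_mul_left n
          (hle.trans (sizeBound_mono n (hk.trans (hr ▸ Nat.le_add_right r s)))))
      · rw [rank_submatrix, Nat.succ_mul]
        have h₁ := Nat.mul_le_mul_left (n * d + 2) hrank
        have h₂ : k * (d * (n * d + 2)) = (n * d + 2) * (k * d) := by ring
        omega

/-- Lowering the blow-up size by one while keeping the relative rank. -/
lemma HasSlicesIn.exists_rank_ge_of_succ {r d : ℕ} (hd : r < d)
    (hF : ((n * (d + 1) + 1 : ℕ) : Cardinal) ≤ Cardinal.mk F)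
    (hB : ∀ A : Matrix (Fin n × Fin (d + 1)) (Fin n × Fin (d + 1)) F, HasSlicesIn B A →
      A.rank ≤ r * (d + 1))
    {A : Matrix (Fin n × Fin (d + 1)) (Fin n × Fin (d + 1)) F} (hA : HasSlicesIn B A)
    (hrank : r * (d + 1) ≤ A.rank) :
    ∃ A' : Matrix (Fin n × Fin d) (Fin n × Fin d) F, HasSlicesIn B A' ∧ r * d ≤ A'.rank := by
  obtain ⟨k, f, g, A', hA', hdet, hk⟩ := hA.exists_det_submatrix_ne_zero d.succ_pos hF
  have h₁ := rank_of_det_ne_zero hdet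
  have h₂ := A'.rank_submatrix_le (Prod.map f id) (Prod.map g id)
  rw [h₁, Fintype.card_prod, Fintype.card_fin, Fintype.card_fin] at h₂
  obtain rfl : k = r := le_antisymm
    (Nat.le_of_mul_le_mul_right (h₂.trans (hB A' hA')) d.succ_pos)
    (Nat.le_of_mul_le_mul_right (hrank.trans hk) d.succ_pos)
  let A'' := A'.submatrix (Prod.map id (Fin.castSucc (n := d))) (Prod.map id (Fin.castSucc (n := d)))
  have hA'' : HasSlicesIn B A'' := hA'.submatrix _ _
  have h₃ := (A'.submatrix (Prod.map f id) (Prod.map g id)).rank_le_rank_submatrix_castSucc_add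
  have h₄ := A''.rank_submatrix_le (Prod.map f id) (Prod.map g id)
  have h₅ : (A'.submatrix (Prod.map f id) (Prod.map g id)).submatrix
      (Prod.map id (Fin.castSucc (n := d))) (Prod.map id (Fin.castSucc (n := d))) =
      A''.submatrix (Prod.map f id) (Prod.map g id) := rfl
  rw [h₁, h₅, Fintype.card_prod, Fintype.card_fin, Fintype.card_fin, Nat.mul_succ] at h₃
  refine hA''.exists_rank_ge (k.zero_le.trans_lt hd) (le_trans ?_ hF) (by omega)
  exact_mod_cast Nat.succ_le_succ (Nat.mul_le_mul_left n d.le_succ)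

end MaximalRank

/-- For every `n` there is `N` depending only on `n` such that over any field `F` with
`|F| ≥ N`, for any nonzero matrix space `B ≤ M(n,F)` of non-commutative rank
`r = n − s*` (where `s*` is the largest `s` such that `B` has an `s`-shrunk subspace),
some blow-up `B^{(d,d)}` with `1 ≤ d ≤ r + 1` contains a matrix of rank `r·d`. -/
theorem stmt0 (n : ℕ) (hn : 0 < n) :
    ∃ N : ℕ, ∀ (F : Type) (_ : Field F),
      (N : Cardinal) ≤ Cardinal.mk F →
      ∀ (B : Submodule F (Matrix (Fin n) (Fin n) F)), B ≠ ⊥ →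
      ∀ (s r : ℕ),
        IsGreatest {s' : ℕ | ∃ U : Submodule F (Fin n → F), IsShrunkSubspace B U s'} s →
        r = n - s →
        ∃ d : ℕ, 1 ≤ d ∧ d ≤ r + 1 ∧
          ∃ A ∈ blowUp B d d, A.rank = r * d := by
  refine ⟨n * sizeBound n n + 1, fun F _ hF B _ s r ⟨⟨U, hU⟩, hs⟩ hr => ?_⟩
  have hsn : s ≤ n := by
    have h₁ := (Nat.le_add_left s _).trans hU
    have h₂ := Submodule.finrank_le U
    rw [Module.finrank_fintype_fun_eq_card, Fintype.card_fin] at h₂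
    exact h₁.trans h₂
  replace hr : r + s = n := by omega
  have hB : ∀ (d : ℕ) (A : Matrix (Fin n × Fin d) (Fin n × Fin d) F), HasSlicesIn B A →
      A.rank ≤ r * d := by
    intro d A hA
    have h₁ := hA.rank_add_le hU
    rw [Fintype.card_fin] at h₁
    have h₂ : r * d + s * d = n * d := by rw [← add_mul, hr]
    omega
  suffices h : ∃ d, 0 < d ∧ d ≤ r + 1 ∧ ∃ A : Matrix (Fin n × Fin d) (Fin n × Fin d) F,
      HasSlicesIn B A ∧ r * d ≤ A.rank by
    obtain ⟨d, hd, hdr, A, hA, hrank⟩ := h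
    exact ⟨d, hd, hdr, A, hA.mem_blowUp, le_antisymm (hB d A hA) hrank⟩
  obtain ⟨d, hd, hdT, hA⟩ := exists_rank_ge_of_le (fun U s' h => hs ⟨U, h⟩) hr hF le_rfl
  replace hdT := hdT.trans (sizeBound_mono n (hr ▸ Nat.le_add_right r s))
  induction d with
  | zero => exact absurd hd (lt_irrefl 0)
  | succ d ih =>
    rcases Nat.lt_or_ge r d with hrd | hrd
    · obtain ⟨A, hA, hrank⟩ := hA
      refine ih (by omega) (hA.exists_rank_ge_of_succ hrd (le_trans ?_ hF) (hB _) hrank) (by omega)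
      exact_mod_cast Nat.succ_le_succ (Nat.mul_le_mul_left n hdT)
    · exact ⟨d + 1, hd, Nat.succ_le_succ hrd, hA⟩
end

section
/- Let F be a field, B ≤ M(n,F) a matrix space, and suppose U ≤ F^n is an s-shrunk subspace of B. Then for every positive integer d, every matrix A in the (d,d)-blow-up B^{(d,d)} has rank at most (n − s)d. -/
open Matrix Kronecker

/-- The vectors in `F^n ⊗ F^d` all of whose `d` slices lie in `W`, i.e. `W ⊗ F^d`. -/
def sliceSubmodule {F : Type} [Field F] {n : ℕ} (W : Submodule F (Fin n → F)) (d : ℕ) :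
    Submodule F (Fin n × Fin d → F) where
  carrier := {x | ∀ j, (fun i => x (i, j)) ∈ W}
  add_mem' hx hy j := W.add_mem (hx j) (hy j)
  zero_mem' _ := W.zero_mem
  smul_mem' c _ hx j := W.smul_mem c (hx j)

/-- A vector of `W ⊗ F^d` is the family of its slices. -/
def sliceSubmoduleEquiv {F : Type} [Field F] {n : ℕ} (W : Submodule F (Fin n → F)) (d : ℕ) :
    sliceSubmodule W d ≃ₗ[F] (Fin d → W) where
  toFun x j := ⟨fun i => x.1 (i, j), x.2 j⟩
  map_add' _ _ := rfl
  map_smul' _ _ := rfl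
  invFun y := ⟨fun p => (y p.2).1 p.1, fun j => (y j).2⟩
  left_inv _ := rfl
  right_inv _ := rfl

theorem finrank_sliceSubmodule {F : Type} [Field F] {n : ℕ} (W : Submodule F (Fin n → F))
    (d : ℕ) : Module.finrank F (sliceSubmodule W d) = d * Module.finrank F W := by
  rw [(sliceSubmoduleEquiv W d).finrank_eq, Module.finrank_pi_fintype]
  simp

theorem LinearMap.finrank_range_add_finrank_le {F E E' : Type*} [Field F] [AddCommGroup E]
    [Module F E] [AddCommGroup E'] [Module F E'] [FiniteDimensional F E]
    [FiniteDimensional F E'] (f : E →ₗ[F] E') (P : Submodule F E) (Q : Submodule F E')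
    (h : P ≤ Q.comap f) :
    Module.finrank F (LinearMap.range f) + Module.finrank F P ≤
      Module.finrank F E + Module.finrank F Q := by
  have hE := f.finrank_range_add_finrank_ker
  have hP := (f.domRestrict P).finrank_range_add_finrank_ker
  have hrange : Module.finrank F (LinearMap.range (f.domRestrict P)) ≤ Module.finrank F Q := by
    refine Submodule.finrank_mono ?_
    rintro _ ⟨x, rfl⟩
    exact h x.2
  have hker : Module.finrank F (LinearMap.ker (f.domRestrict P)) ≤
      Module.finrank F (LinearMap.ker f) := by
    rw [← Submodule.finrank_map_subtype_eq P]
    refine Submodule.finrank_mono ?_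
    rintro _ ⟨x, hx, rfl⟩
    exact hx
  omega

theorem kronecker_mulVec_slice {F : Type} [Field F] {n k ℓ : ℕ} (A : Matrix (Fin n) (Fin n) F)
    (T : Matrix (Fin k) (Fin ℓ) F) (x : Fin n × Fin ℓ → F) (j : Fin k) :
    (fun i => ((A ⊗ₖ T) *ᵥ x) (i, j)) = A *ᵥ ∑ l, T j l • fun i => x (i, l) := by
  ext i
  simp only [mulVec, dotProduct, kroneckerMap_apply, Fintype.sum_prod_type, Finset.sum_apply,
    Pi.smul_apply, smul_eq_mul, Finset.mul_sum, mul_assoc]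

theorem mulVec_mem_sliceSubmodule_of_mem_blowUp {F : Type} [Field F] {n k ℓ : ℕ}
    {B : Submodule F (Matrix (Fin n) (Fin n) F)} {U : Submodule F (Fin n → F)}
    {A : Matrix (Fin n × Fin k) (Fin n × Fin ℓ) F} (hA : A ∈ blowUp B k ℓ)
    {x : Fin n × Fin ℓ → F} (hx : x ∈ sliceSubmodule U ℓ) :
    A *ᵥ x ∈ sliceSubmodule (Submodule.span F {v | ∃ A ∈ B, ∃ u ∈ U, v = A.mulVec u}) k := by
  induction hA using Submodule.span_induction with
  | mem M hM =>
    obtain ⟨A, hA, T, rfl⟩ := hM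
    intro j
    rw [kronecker_mulVec_slice]
    exact Submodule.subset_span
      ⟨A, hA, _, U.sum_mem fun l _ => U.smul_mem (T j l) (hx l), rfl⟩
  | zero => simp
  | add M N _ _ hM hN =>
    rw [add_mulVec]
    exact Submodule.add_mem _ hM hN
  | smul c M _ hM =>
    rw [smul_mulVec]
    exact Submodule.smul_mem _ c hM

/-- If `B` has an `s`-shrunk subspace, then every matrix in the `(d,d)`-blow-up of `B`
has rank at most `(n − s)·d`. -/
theorem stmt1 {F : Type} [Field F] {n : ℕ}
    (B : Submodule F (Matrix (Fin n) (Fin n) F))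
    (U : Submodule F (Fin n → F)) (s : ℕ)
    (hU : IsShrunkSubspace B U s)
    (d : ℕ) (hd : 0 < d) :
    ∀ A ∈ blowUp B d d, A.rank ≤ (n - s) * d := by
  intro A hA
  have hrank := LinearMap.finrank_range_add_finrank_le A.mulVecLin (sliceSubmodule U d)
    (sliceSubmodule (Submodule.span F {v | ∃ A ∈ B, ∃ u ∈ U, v = A.mulVec u}) d)
    fun _ hx => mulVec_mem_sliceSubmodule_of_mem_blowUp hA hx
  have hUn : Module.finrank F U ≤ n := by simpa using U.finrank_le
  rw [finrank_sliceSubmodule, finrank_sliceSubmodule, Module.finrank_fintype_fun_eq_card,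
    Fintype.card_prod, Fintype.card_fin, Fintype.card_fin] at hrank
  change A.rank + _ ≤ _ at hrank
  unfold IsShrunkSubspace at hU
  obtain ⟨m, rfl⟩ : ∃ m, n = m + s := ⟨n - s, by omega⟩
  rw [Nat.add_sub_cancel]
  nlinarith [Nat.mul_le_mul_left d hU]
end

section
/- (Regularity of blow-ups.) For all positive integers r and d there exists a natural number N such that the following holds. Let F be a field with |F| ≥ N and let B ≤ M(n,F) be a matrix space. If the (d,d)-blow-up B^{(d,d)} contains a matrix A with rank(A) > (r − 1)d, then B^{(d,d)} contains a matrix Ã with rank(Ã) ≥ rd. In particular, the maximal rank of a matrix in B^{(d,d)} is divisible by d whenever |F| is sufficiently large in terms of that maximal rank and d. -/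
open Matrix Kronecker

/-- A rank factorization `M = P * Q`, together with one-sided inverses of both factors. -/
theorem Matrix.exists_rank_factorization {E m n : Type*} [Field E] [Fintype m] [DecidableEq m]
    [Fintype n] [DecidableEq n] (M : Matrix m n E) :
    ∃ (P : Matrix m (Fin M.rank) E) (Q : Matrix (Fin M.rank) n E)
      (P' : Matrix (Fin M.rank) m E) (Q' : Matrix n (Fin M.rank) E),
      P * Q = M ∧ P' * P = 1 ∧ Q * Q' = 1 := by
  let f := M.toLin'
  let e : LinearMap.range f ≃ₗ[E] (Fin M.rank → E) :=
    LinearEquiv.ofFinrankEq _ _ (by rw [Module.finrank_fin_fun]; rfl)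
  let p : (Fin M.rank → E) →ₗ[E] (m → E) := (LinearMap.range f).subtype ∘ₗ e.symm
  let q : (n → E) →ₗ[E] (Fin M.rank → E) := e ∘ₗ f.rangeRestrict
  obtain ⟨p', hp'⟩ := p.exists_leftInverse_of_injective (LinearMap.ker_eq_bot.2
    ((LinearMap.range f).injective_subtype.comp e.symm.injective))
  obtain ⟨q', hq'⟩ := q.exists_rightInverse_of_surjective (LinearMap.range_eq_top.2
    (e.surjective.comp f.surjective_rangeRestrict))
  refine ⟨p.toMatrix', q.toMatrix', p'.toMatrix', q'.toMatrix', ?_, ?_, ?_⟩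
  · rw [← LinearMap.toMatrix'_comp]
    have : p ∘ₗ q = f := by ext; simp [p, q]
    rw [this, LinearMap.toMatrix'_toLin']
  · rw [← LinearMap.toMatrix'_comp, hp', LinearMap.toMatrix'_id]
  · rw [← LinearMap.toMatrix'_comp, hq', LinearMap.toMatrix'_id]

theorem Matrix.le_rank_iff_exists_mul_mul_eq_one {E m n : Type*} [Field E] [Fintype m]
    [DecidableEq m] [Fintype n] [DecidableEq n] (M : Matrix m n E) (k : ℕ) :
    k ≤ M.rank ↔ ∃ (P : Matrix (Fin k) m E) (Q : Matrix n (Fin k) E), P * M * Q = 1 := by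
  constructor
  · intro hk
    obtain ⟨P, Q, P', Q', hM, hP, hQ⟩ := M.exists_rank_factorization
    refine ⟨P'.submatrix (Fin.castLE hk) id, Q'.submatrix id (Fin.castLE hk), ?_⟩
    have h : P' * M * Q' = 1 := by
      simp_rw [← hM]
      rw [← Matrix.mul_assoc, hP, Matrix.one_mul, hQ]
    have := congrArg (fun X => X.submatrix (Fin.castLE hk) (Fin.castLE hk)) h
    simpa [Matrix.submatrix_mul _ _ _ id _ Function.bijective_id,
      Matrix.submatrix_one _ (Fin.castLE_injective hk)] using this
  · rintro ⟨P, Q, h⟩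
    calc k = (P * M * Q).rank := by simp [h]
      _ ≤ (P * M).rank := rank_mul_le_left _ _
      _ ≤ M.rank := rank_mul_le_right _ _

theorem Matrix.rank_map_algebraMap {F E m n : Type*} [Field F] [Field E] [Algebra F E]
    [Fintype m] [DecidableEq m] [Fintype n] [DecidableEq n] (M : Matrix m n F) :
    (M.map (algebraMap F E)).rank = M.rank := by
  apply le_antisymm
  · obtain ⟨P, Q, -, -, hM, -, -⟩ := M.exists_rank_factorization
    calc (M.map (algebraMap F E)).rank
        = (P.map (algebraMap F E) * Q.map (algebraMap F E)).rank := by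
          rw [← Matrix.map_mul, hM]
      _ ≤ (P.map (algebraMap F E)).rank := rank_mul_le_left _ _
      _ ≤ M.rank := by simpa using rank_le_card_width (P.map (algebraMap F E))
  · obtain ⟨P, Q, h⟩ := (M.le_rank_iff_exists_mul_mul_eq_one _).1 le_rfl
    refine (Matrix.le_rank_iff_exists_mul_mul_eq_one _ _).2
      ⟨P.map (algebraMap F E), Q.map (algebraMap F E), ?_⟩
    rw [← Matrix.map_mul, ← Matrix.map_mul, h]
    simp

/-- A rank bound attained on a line over `E` is attained at a point of that line with parameter
in a sufficiently large subfield. -/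
theorem Matrix.exists_le_rank_add_smul {F E m n : Type*} [Field F] [Field E] [Algebra F E]
    [Fintype m] [DecidableEq m] [Fintype n] [DecidableEq n] {k : ℕ}
    (hF : ((k + 1 : ℕ) : Cardinal) ≤ Cardinal.mk F) (W M : Matrix m n E) (c : E)
    (h : k ≤ (W + c • M).rank) : ∃ s : F, k ≤ (W + s • M).rank := by
  obtain ⟨P, Q, hPQ⟩ := (Matrix.le_rank_iff_exists_mul_mul_eq_one _ _).1 h
  by_contra! hs
  let p : Polynomial E := det ((Polynomial.X : Polynomial E) •
    (P * M * Q).map Polynomial.C + (P * W * Q).map Polynomial.C)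
  have eval_p (x : E) : p.eval x = (P * (W + x • M) * Q).det := by
    have : P * (W + x • M) * Q = x • (P * M * Q) + P * W * Q := by
      simp [Matrix.mul_add, Matrix.add_mul, add_comm]
    rw [this, ← Polynomial.coe_evalRingHom, RingHom.map_det]
    congr 1
    ext i j
    simp [-Matrix.map_mul, mul_comm x]
  obtain ⟨S, hS⟩ := Cardinal.exists_finset_le_card F _ hF
  have hp : p = 0 := by
    refine Polynomial.eq_zero_of_natDegree_lt_card_of_eval_eq_zero p
      (f := fun s : S => algebraMap F E s)
      ((algebraMap F E).injective.comp Subtype.val_injective) (fun s => ?_) ?_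
    · by_contra hne
      rw [eval_p, algebraMap_smul] at hne
      have hr : (P * (W + (s : F) • M) * Q).rank = k := by
        simpa using rank_of_det_ne_zero hne
      have h1 := rank_mul_le_left (P * (W + (s : F) • M)) Q
      have h2 := rank_mul_le_right P (W + (s : F) • M)
      have := hs s
      omega
    · have := Polynomial.natDegree_det_X_add_C_le (P * M * Q) (P * W * Q)
      simp only [Fintype.card_fin] at this
      simp only [Fintype.card_coe]
      exact this.trans_lt hS
  have := eval_p c
  rw [hp, hPQ] at this
  simp at this

/-- Over a sufficiently large field `F`, the `F`-span of a set of matrices over an extension `E`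
attains every rank bound attained by the `E`-span. -/
theorem Matrix.exists_mem_span_le_rank {F E m n : Type*} [Field F] [Field E] [Algebra F E]
    [Fintype m] [DecidableEq m] [Fintype n] [DecidableEq n] {k : ℕ}
    (hF : ((k + 1 : ℕ) : Cardinal) ≤ Cardinal.mk F) {V : Set (Matrix m n E)} {M : Matrix m n E}
    (hM : M ∈ Submodule.span E V) (h : k ≤ M.rank) :
    ∃ M' ∈ Submodule.span F V, k ≤ M'.rank := by
  suffices ∀ W : Matrix m n E, k ≤ (W + M).rank →
      ∃ M' ∈ Submodule.span F V, k ≤ (W + M').rank by simpa using this 0 (by simpa using h)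
  clear h
  induction hM using Submodule.closure_induction with
  | zero => exact fun W hW => ⟨0, zero_mem _, hW⟩
  | add x y _ _ hx hy =>
    intro W hW
    obtain ⟨x', hx', hW⟩ := hx (W + y) (by rwa [add_assoc, add_comm y])
    obtain ⟨y', hy', hW⟩ := hy (W + x') (by rwa [add_right_comm])
    exact ⟨x' + y', add_mem hx' hy', by rwa [← add_assoc]⟩
  | smul_mem c x hx =>
    intro W hW
    obtain ⟨s, hs⟩ := exists_le_rank_add_smul hF W x c hW
    exact ⟨s • x, Submodule.smul_mem _ _ (Submodule.subset_span hx), hs⟩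

theorem Matrix.exists_pow_eq_smul_one {R : Type*} [CommRing R] [Nontrivial R] {d : ℕ} (hd : 0 < d)
    (w : R) : ∃ U : Matrix (Fin d) (Fin d) R, U ^ d = w • (1 : Matrix (Fin d) (Fin d) R) := by
  have hm : (Polynomial.X ^ d - Polynomial.C w).Monic := Polynomial.monic_X_pow_sub_C w hd.ne'
  let b := (AdjoinRoot.powerBasis' hm).basis.reindex
    (finCongr (Polynomial.natDegree_X_pow_sub_C (n := d) (r := w)))
  refine ⟨Algebra.leftMulMatrix b (AdjoinRoot.root _), ?_⟩
  have h : AdjoinRoot.root (Polynomial.X ^ d - Polynomial.C w) ^ d = algebraMap R _ w := by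
    have := AdjoinRoot.mk_self (f := Polynomial.X ^ d - Polynomial.C w)
    rw [map_sub, map_pow, AdjoinRoot.mk_X, AdjoinRoot.mk_C, sub_eq_zero] at this
    exact this
  rw [← map_pow, h, AlgHom.commutes, Algebra.algebraMap_eq_smul_one]

/-- If `M` commutes with the semilinear map `U ∘ σ`, whose `d`-th power is `w`, and if `w ^ s` is
a norm only for `d ∣ s`, then `d` divides the rank of `M`. -/
theorem Matrix.dvd_rank_of_mul_eq_mul_map {E m : Type*} [Field E] [Fintype m] [DecidableEq m]
    {d : ℕ} {σ : E ≃+* E} {w : E} (hσ : σ ^ d = 1)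
    (hw : ∀ (g : E) (s : ℕ), ∏ i ∈ Finset.range d, (σ ^ i) g = w ^ s → d ∣ s)
    {U : Matrix m m E} (hU : U.map σ = U) (hUd : U ^ d = w • (1 : Matrix m m E))
    {M : Matrix m m E} (hM : M * U = U * M.map σ) : d ∣ M.rank := by
  obtain ⟨P, Q, P', Q', hPQ, hP, hQ⟩ := M.exists_rank_factorization
  let G := Q * U * Q'.map σ
  have hG : U * P.map σ = P * G := by
    have h : U * P.map σ * Q.map σ = P * Q * U := by
      rw [Matrix.mul_assoc, ← Matrix.map_mul, hPQ, hM]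
    calc U * P.map σ = U * P.map σ * (Q * Q').map σ := by simp [hQ]
      _ = U * P.map σ * Q.map σ * Q'.map σ := by simp [Matrix.mul_assoc]
      _ = P * G := by rw [h]; simp only [G, Matrix.mul_assoc]
  have key (k : ℕ) : ∃ H : Matrix (Fin M.rank) (Fin M.rank) E,
      U ^ k * P.map ⇑(σ ^ k) = P * H ∧ H.det = ∏ i ∈ Finset.range k, (σ ^ i) G.det := by
    induction k with
    | zero => exact ⟨1, by ext; simp, by simp⟩
    | succ k ih =>
      obtain ⟨H, hH, hdet⟩ := ih
      refine ⟨G * H.map σ, ?_, ?_⟩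
      · have hUk : (U ^ k).map σ = U ^ k := by
          rw [← RingEquiv.mapMatrix_apply, map_pow, RingEquiv.mapMatrix_apply, hU]
        calc U ^ (k + 1) * P.map ⇑(σ ^ (k + 1)) = U * (U ^ k * P.map ⇑(σ ^ k)).map σ := by
              rw [Matrix.map_mul, hUk, pow_succ', Matrix.mul_assoc, pow_succ']
              congr 2
          _ = P * (G * H.map σ) := by
              rw [hH, Matrix.map_mul, ← Matrix.mul_assoc, hG, Matrix.mul_assoc]
      · have : (H.map σ).det = σ H.det := (RingEquiv.map_det σ H).symm
        rw [det_mul, this, hdet, Finset.prod_range_succ', map_prod, mul_comm]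
        simp [pow_succ']
  obtain ⟨H, hH, hdet⟩ := key d
  have hHw : H = w • (1 : Matrix (Fin M.rank) (Fin M.rank) E) := by
    have hPid : P.map ⇑(σ ^ d) = P := by rw [hσ]; ext; simp
    rw [hUd, hPid] at hH
    calc H = P' * (P * H) := by rw [← Matrix.mul_assoc, hP, Matrix.one_mul]
      _ = w • 1 := by rw [← hH]; simp [hP]
  refine hw G.det _ ?_
  rw [← hdet, hHw]
  simp

/-- The matrices commuting with the semilinear map `U ∘ σ`, whose `d`-th power is the scalar `w`,
span the full matrix algebra. -/
theorem Matrix.span_mul_eq_mul_map_eq_top {E m : Type*} [Field E] [Fintype m] [DecidableEq m]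
    {d : ℕ} (hd : 0 < d) {σ : E ≃+* E} {w : E} (hw : w ≠ 0) (hσ : σ ^ d = 1)
    (hinj : Function.Injective fun k : Fin d => σ ^ (k : ℕ))
    {U : Matrix m m E} (hU : U.map σ = U) (hUd : U ^ d = w • (1 : Matrix m m E)) :
    Submodule.span E {T : Matrix m m E | T * U = U * T.map σ} = ⊤ := by
  by_contra hne
  obtain ⟨f, hf, hle⟩ := Submodule.exists_le_ker_of_lt_top _ (lt_top_iff_ne_top.2 hne)
  have hunit : IsUnit U := by
    refine (isUnit_pow_iff hd.ne').1 ?_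
    rw [hUd, Matrix.isUnit_iff_isUnit_det]
    simp [hw]
  obtain ⟨u, rfl⟩ := hunit
  let Θ (k : ℕ) (T : Matrix m m E) : Matrix m m E :=
    u.val ^ k * T.map ⇑(σ ^ k) * (u⁻¹).val ^ k
  have hΘzero (T) : Θ 0 T = T := by simp only [Θ]; ext; simp
  have hΘd (T) : Θ d T = T := by
    have h1 : T.map ⇑(σ ^ d) = T := by rw [hσ]; ext; simp
    have h2 : u.val ^ d * T = T * u.val ^ d := by simp [hUd]
    simp only [Θ, h1]
    rw [h2, Matrix.mul_assoc, ← Units.val_pow_eq_pow_val, ← Units.val_pow_eq_pow_val, inv_pow,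
      Units.mul_inv, Matrix.mul_one]
  have hΘsucc (k T) : Θ (k + 1) T * u.val = u.val * (Θ k T).map σ := by
    have hinv : σ.mapMatrix (u⁻¹).val = (u⁻¹).val := by
      refine (Units.inv_eq_of_mul_eq_one_right (u := u) ?_).symm
      nth_rewrite 1 [← hU]
      rw [← RingEquiv.mapMatrix_apply, ← map_mul, Units.mul_inv, map_one]
    have hT : σ.mapMatrix (T.map ⇑(σ ^ k)) = T.map ⇑(σ ^ (k + 1)) := by
      rw [pow_succ']
      rfl
    rw [← RingEquiv.mapMatrix_apply] at hU ⊢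
    simp only [Θ]
    rw [map_mul, map_mul, map_pow, map_pow, hU, hinv, hT, pow_succ' u.val, pow_succ (u⁻¹).val]
    simp only [Matrix.mul_assoc]
    rw [Units.inv_mul, Matrix.mul_one]
  have hΘsmul (k c T) : Θ k (c • T) = (σ ^ k) c • Θ k T := by
    have h : (c • T).map (σ ^ k) = (σ ^ k) c • T.map ⇑(σ ^ k) := by ext; simp
    simp only [Θ, h, Matrix.mul_smul, Matrix.smul_mul]
  apply hf
  ext1 T
  have hsum (c : E) : ∑ k : Fin d, f (Θ k T) * (σ ^ (k : ℕ)) c = 0 := by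
    have hmem : ∑ k ∈ Finset.range d, Θ k (c • T) ∈
        {T : Matrix m m E | T * u.val = u.val * T.map σ} := by
      have h := Finset.sum_range_succ' (fun k => Θ k (c • T)) d
      rw [Finset.sum_range_succ, hΘd, hΘzero, add_left_inj] at h
      change _ = u.val * σ.mapMatrix _
      conv_lhs => rw [h]
      rw [Finset.sum_mul, map_sum, Finset.mul_sum]
      exact Finset.sum_congr rfl fun k _ => hΘsucc k _
    have := hle (Submodule.subset_span hmem)
    rw [LinearMap.mem_ker, map_sum, Finset.sum_range] at this
    rw [← this]
    refine Finset.sum_congr rfl fun k _ => ?_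
    rw [hΘsmul, map_smul, smul_eq_mul, mul_comm]
  have hli : LinearIndependent E fun k : Fin d => ((σ ^ (k : ℕ) : E ≃+* E) : E → E) := by
    refine (linearIndependent_monoidHom E E).comp
      (fun k : Fin d => ((σ ^ (k : ℕ) : E ≃+* E) : E →* E)) fun i j hij => hinj ?_
    ext x
    exact DFunLike.congr_fun hij x
  have := Fintype.linearIndependent_iff.1 hli (fun k => f (Θ k T))
    (by ext c; simpa using hsum c) ⟨0, hd⟩
  rw [hΘzero] at this
  simpa using this

theorem MvPolynomial.totalDegree_prod_of_isDomain {ι κ R : Type*} [CommRing R] [IsDomain R]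
    {t : Finset ι} {f : ι → MvPolynomial κ R} (hf : ∀ i ∈ t, f i ≠ 0) :
    (∏ i ∈ t, f i).totalDegree = ∑ i ∈ t, (f i).totalDegree := by
  classical
  induction t using Finset.induction_on with
  | empty => simp
  | insert a t ha ih =>
    have ht : ∀ i ∈ t, f i ≠ 0 := fun i hi => hf i (Finset.mem_insert_of_mem hi)
    rw [Finset.prod_insert ha, Finset.sum_insert ha, totalDegree_mul_of_isDomain
      (hf a (Finset.mem_insert_self a t)) (Finset.prod_ne_zero_iff.2 ht), ih ht]

/-- A field extension of `F` with an automorphism `σ` of order `d` and a fixed element `w` such that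
`w ^ s` is a norm for `σ` only if `d ∣ s`. -/
theorem exists_field_ringEquiv_norm (F : Type) [Field F] {d : ℕ} (hd : 0 < d) :
    ∃ (E : Type) (_ : Field E) (_ : Algebra F E) (σ : E ≃+* E) (w : E),
      (∀ a : F, σ (algebraMap F E a) = algebraMap F E a) ∧ σ w = w ∧ w ≠ 0 ∧ σ ^ d = 1 ∧
      (Function.Injective fun k : Fin d => σ ^ (k : ℕ)) ∧
      ∀ (g : E) (s : ℕ), ∏ i ∈ Finset.range d, (σ ^ i) g = w ^ s → d ∣ s := by
  have : NeZero d := ⟨hd.ne'⟩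
  let A := MvPolynomial (ZMod d) F
  let E := FractionRing A
  let τ (k : ZMod d) : A ≃+* A := (MvPolynomial.renameEquiv F (Equiv.addRight k)).toRingEquiv
  have hτ (k p) : τ k p = MvPolynomial.rename (· + k) p := rfl
  have hid (p : A) : MvPolynomial.rename (fun x : ZMod d => x) p = p :=
    MvPolynomial.rename_id_apply p
  have hτpow (k : ℕ) : τ 1 ^ k = τ k := by
    induction k with
    | zero => exact RingEquiv.ext fun p => by simp [hτ, hid]
    | succ k ih =>
      rw [pow_succ', ih]
      refine RingEquiv.ext fun p => ?_
      change τ 1 (τ k p) = _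
      simp only [hτ, MvPolynomial.rename_rename]
      congr 2
      ext x
      simp [add_assoc]
  let φ := IsFractionRing.ringEquivOfRingEquivHom A E
  have hφ (e : A ≃+* A) (p : A) : φ e (algebraMap A E p) = algebraMap A E (e p) :=
    IsFractionRing.ringEquivOfRingEquiv_algebraMap e p
  have hpow (k : ℕ) : φ (τ 1) ^ k = φ (τ k) := by rw [← map_pow, hτpow]
  let w₀ : A := ∑ i, MvPolynomial.X i
  have hw₀ : w₀ ≠ 0 := fun h => by
    have := congrArg (MvPolynomial.eval (Pi.single 0 1)) h
    simp [w₀] at this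
  have hw₀deg (s : ℕ) : (w₀ ^ s).totalDegree = s := by
    have h : w₀.IsHomogeneous 1 :=
      MvPolynomial.IsHomogeneous.sum _ _ _ fun i _ => MvPolynomial.isHomogeneous_X F i
    simpa using (h.pow s).totalDegree (pow_ne_zero s hw₀)
  have hinj : Function.Injective (algebraMap A E) := IsFractionRing.injective A E
  refine ⟨E, inferInstance, inferInstance, φ (τ 1), algebraMap A E w₀, ?_, ?_, ?_, ?_, ?_, ?_⟩
  · intro a
    rw [IsScalarTower.algebraMap_apply F A E, hφ]
    rw [hτ, AlgHom.commutes]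
  · rw [hφ]
    congr 1
    simp only [hτ, w₀, map_sum, MvPolynomial.rename_X]
    exact Equiv.sum_comp (Equiv.addRight (1 : ZMod d)) MvPolynomial.X
  · simpa using hw₀
  · rw [← map_pow, hτpow]
    convert map_one φ
    exact RingEquiv.ext fun p => by simp [hτ, hid]
  · intro i j hij
    simp only [hpow] at hij
    have h := RingEquiv.congr_fun hij (algebraMap A E (MvPolynomial.X 0))
    rw [hφ, hφ] at h
    have h := hinj h
    simp only [hτ, MvPolynomial.rename_X, zero_add] at h
    have h := MvPolynomial.X_injective h
    rw [ZMod.natCast_eq_natCast_iff'] at h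
    rw [Nat.mod_eq_of_lt i.2, Nat.mod_eq_of_lt j.2] at h
    exact Fin.ext h
  · intro g s hg
    obtain ⟨p, q, hq, rfl⟩ := IsFractionRing.div_surjective (A := A) g
    have hq0 : q ≠ 0 := nonZeroDivisors.ne_zero hq
    have hprod (p : A) : ∏ i ∈ Finset.range d, (φ (τ 1) ^ i) (algebraMap A E p) =
        algebraMap A E (∏ i ∈ Finset.range d, τ i p) := by
      simp only [hpow, hφ, map_prod]
    have hne {p : A} (hp : p ≠ 0) : ∏ i ∈ Finset.range d, τ i p ≠ 0 :=
      Finset.prod_ne_zero_iff.2 fun i _ => by simpa using hp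
    have hdeg {p : A} (hp : p ≠ 0) :
        (∏ i ∈ Finset.range d, τ i p).totalDegree = d * p.totalDegree := by
      rw [MvPolynomial.totalDegree_prod_of_isDomain fun i _ => by simpa using hp]
      have (i : ZMod d) : (τ i p).totalDegree = p.totalDegree :=
        MvPolynomial.totalDegree_renameEquiv _ p
      simp [this]
    simp only [map_div₀, Finset.prod_div_distrib, hprod] at hg
    rw [div_eq_iff ((map_ne_zero_iff _ hinj).2 (hne hq0)), ← map_pow, ← map_mul] at hg
    have hg := hinj hg
    have hp0 : p ≠ 0 := by
      rintro rfl
      have : w₀ ^ s * ∏ i ∈ Finset.range d, τ i q = 0 := by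
        rw [← hg]; simp [hd.ne']
      exact mul_ne_zero (pow_ne_zero _ hw₀) (hne hq0) this
    have := congrArg MvPolynomial.totalDegree hg
    rw [MvPolynomial.totalDegree_mul_of_isDomain (pow_ne_zero _ hw₀) (hne hq0), hdeg hp0,
      hdeg hq0, hw₀deg] at this
    exact (Nat.dvd_add_left (dvd_mul_right d _)).1 (this ▸ dvd_mul_right d _)

/-- Regularity of blow-ups: for all positive `r, d` there is `N` such that over any
field `F` with `|F| ≥ N`, if the `(d,d)`-blow-up of a matrix space `B ≤ M(n,F)` contains
a matrix of rank greater than `(r−1)·d`, then it contains a matrix of rank at least `r·d`. -/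
theorem stmt4 (r d : ℕ) (hr : 0 < r) (hd : 0 < d) :
    ∃ N : ℕ, ∀ (F : Type) (_ : Field F),
      (N : Cardinal) ≤ Cardinal.mk F →
      ∀ (n : ℕ) (B : Submodule F (Matrix (Fin n) (Fin n) F)),
        (∃ A ∈ blowUp B d d, (r - 1) * d < A.rank) →
        ∃ A' ∈ blowUp B d d, r * d ≤ A'.rank := by
  refine ⟨r * d + 1, fun F _ hF n B ⟨A, hA, hrank⟩ => ?_⟩
  have hlt : (r - 1) * d + 1 ≤ r * d := Nat.mul_lt_mul_of_pos_right (Nat.sub_one_lt hr.ne') hd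
  obtain ⟨E, _, _, σ, w, hσF, hσw, hw, hσ, hinj, hnorm⟩ := exists_field_ringEquiv_norm F hd
  obtain ⟨U₀, hU₀⟩ := Matrix.exists_pow_eq_smul_one hd (Polynomial.X : Polynomial F)
  let ψ : Polynomial F →+* E := Polynomial.eval₂RingHom (algebraMap F E) w
  have hψ : (σ : E →+* E).comp ψ = ψ := by
    apply Polynomial.ringHom_ext <;> simp [ψ, hσF, hσw]
  let U : Matrix (Fin d) (Fin d) E := ψ.mapMatrix U₀
  have hU : U.map σ = U := by
    ext i j
    exact RingHom.congr_fun hψ (U₀ i j)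
  have hUd : U ^ d = w • (1 : Matrix (Fin d) (Fin d) E) := by
    simp only [U]
    rw [← map_pow, hU₀]
    ext i j
    by_cases h : i = j <;> simp [ψ, h]
  let D : Set (Matrix (Fin d) (Fin d) E) := {T | T * U = U * T.map σ}
  have hD : Submodule.span E D = ⊤ := Matrix.span_mul_eq_mul_map_eq_top hd hw hσ hinj hU hUd
  let V : Set (Matrix (Fin n × Fin d) (Fin n × Fin d) E) :=
    {M | ∃ A ∈ B, ∃ T ∈ D, M = A.map (algebraMap F E) ⊗ₖ T}
  let W : Set (Matrix (Fin n × Fin d) (Fin n × Fin d) E) :=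
    {M | ∃ A ∈ B, ∃ T : Matrix (Fin d) (Fin d) F,
      M = A.map (algebraMap F E) ⊗ₖ T.map (algebraMap F E)}
  -- every simple tensor over `E` is an `E`-combination of tensors with second factor in `D`
  have hV {A₀ : Matrix (Fin n) (Fin n) F} (hA₀ : A₀ ∈ B) (T : Matrix (Fin d) (Fin d) E) :
      A₀.map (algebraMap F E) ⊗ₖ T ∈ Submodule.span E V := by
    have hT : T ∈ Submodule.span E D := hD ▸ Submodule.mem_top
    induction hT using Submodule.span_induction with
    | mem T hT => exact Submodule.subset_span ⟨A₀, hA₀, T, hT, rfl⟩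
    | zero => simp
    | add x y _ _ hx hy => rw [Matrix.kronecker_add]; exact add_mem hx hy
    | smul c x _ hx => rw [Matrix.kronecker_smul]; exact Submodule.smul_mem _ _ hx
  have hAV : A.map (algebraMap F E) ∈ Submodule.span E V := by
    clear hrank
    induction hA using Submodule.closure_induction with
    | zero => simp
    | add x y _ _ hx hy => rw [Matrix.map_add _ (map_add _)]; exact add_mem hx hy
    | smul_mem c x hx =>
      obtain ⟨A₀, hA₀, T, rfl⟩ := hx
      have : (c • A₀ ⊗ₖ T).map (algebraMap F E) =
          algebraMap F E c • (A₀.map (algebraMap F E) ⊗ₖ T.map (algebraMap F E)) := by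
        ext; simp
      rw [this]
      exact Submodule.smul_mem _ _ (hV hA₀ _)
  obtain ⟨M, hMV, hMrank⟩ := Matrix.exists_mem_span_le_rank (k := (r - 1) * d + 1)
    (le_trans (by exact_mod_cast Nat.succ_le_succ hlt) hF) hAV
    (by rw [Matrix.rank_map_algebraMap]; exact hrank)
  have hMU : M * ((1 : Matrix (Fin n) (Fin n) E) ⊗ₖ U) =
      ((1 : Matrix (Fin n) (Fin n) E) ⊗ₖ U) * M.map σ := by
    clear hMrank
    induction hMV using Submodule.span_induction with
    | mem M hM =>
      obtain ⟨A₀, -, T, hT, rfl⟩ := hM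
      have : (A₀.map (algebraMap F E) ⊗ₖ T).map σ = A₀.map (algebraMap F E) ⊗ₖ T.map σ := by
        ext; simp [hσF]
      rw [this, ← Matrix.mul_kronecker_mul, ← Matrix.mul_kronecker_mul, Matrix.mul_one,
        Matrix.one_mul, hT]
    | zero => simp
    | add x y _ _ hx hy =>
      rw [Matrix.map_add _ (map_add _), Matrix.add_mul, Matrix.mul_add, hx, hy]
    | smul c x _ hx =>
      have : (c • x).map σ = c • x.map σ := by
        ext
        rw [Matrix.map_apply, Matrix.smul_apply, Matrix.smul_apply, Matrix.map_apply, Algebra.smul_def,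
          Algebra.smul_def, map_mul, hσF]
      rw [this, Matrix.smul_mul, Matrix.mul_smul, hx]
  have hdvd : d ∣ M.rank := by
    refine Matrix.dvd_rank_of_mul_eq_mul_map hσ hnorm
      (U := (1 : Matrix (Fin n) (Fin n) E) ⊗ₖ U) ?_ ?_ hMU
    · conv_rhs => rw [← hU]
      ext i j
      by_cases h : i.1 = j.1 <;> simp [Matrix.one_apply, h]
    · have hpow (k : ℕ) : ((1 : Matrix (Fin n) (Fin n) E) ⊗ₖ U) ^ k = 1 ⊗ₖ (U ^ k) := by
        induction k with
        | zero => simp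
        | succ k ih => rw [pow_succ, ih, ← Matrix.mul_kronecker_mul, pow_succ, Matrix.mul_one]
      rw [hpow, hUd, Matrix.kronecker_smul, Matrix.one_kronecker_one]
  have hMrank' : r * d ≤ M.rank := by
    obtain ⟨t, ht⟩ := hdvd
    rw [ht, mul_comm d] at hMrank ⊢
    exact Nat.mul_le_mul_right d (Nat.le_of_pred_lt (lt_of_mul_lt_mul_right hMrank (Nat.zero_le d)))
  have hMW : M ∈ Submodule.span E W := by
    refine Submodule.span_le.2 ?_ (Submodule.span_le_restrictScalars F E V hMV)
    rintro _ ⟨A₀, hA₀, T, -, rfl⟩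
    have hsum : A₀.map (algebraMap F E) ⊗ₖ T =
        ∑ i, ∑ j, T i j • (A₀.map (algebraMap F E) ⊗ₖ
          (Matrix.single i j (1 : F)).map (algebraMap F E)) := by
      ext ⟨a, b⟩ ⟨a', b'⟩
      simp [Matrix.sum_apply, Matrix.single_apply, ite_and, apply_ite, mul_comm]
    rw [hsum]
    exact Submodule.sum_mem _ fun i _ => Submodule.sum_mem _ fun j _ =>
      Submodule.smul_mem _ _ (Submodule.subset_span ⟨A₀, hA₀, _, rfl⟩)
  obtain ⟨M', hM', hM'rank⟩ := Matrix.exists_mem_span_le_rank hF hMW hMrank'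
  suffices ∃ A' ∈ blowUp B d d, A'.map (algebraMap F E) = M' by
    obtain ⟨A', hA', rfl⟩ := this
    exact ⟨A', hA', by rwa [Matrix.rank_map_algebraMap] at hM'rank⟩
  clear hM'rank
  induction hM' using Submodule.span_induction with
  | mem x hx =>
    obtain ⟨A₀, hA₀, T, rfl⟩ := hx
    exact ⟨A₀ ⊗ₖ T, Submodule.subset_span ⟨A₀, hA₀, T, rfl⟩, by ext; simp⟩
  | zero => exact ⟨0, zero_mem _, by simp⟩
  | add x y _ _ hx hy =>
    obtain ⟨x', hx', rfl⟩ := hx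
    obtain ⟨y', hy', rfl⟩ := hy
    exact ⟨x' + y', add_mem hx' hy', by ext; simp⟩
  | smul c x _ hx =>
    obtain ⟨x', hx', rfl⟩ := hx
    exact ⟨c • x', Submodule.smul_mem _ _ hx', by
      ext
      rw [Matrix.map_apply, Matrix.smul_apply, Matrix.smul_apply, Matrix.map_apply, smul_eq_mul,
        map_mul, Algebra.smul_def]⟩
end

section
/- For every prime p and every integer s ≥ 1 there exists a field extension K_s of the rational function field F_p(Z) such that K_s/F_p(Z) is a Galois extension of degree p^s whose Galois group is cyclic, and F_p is algebraically closed in K_s (i.e., every element of K_s that is algebraic over F_p already lies in F_p). -/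
open Polynomial IntermediateField

namespace WittVector

variable {p : ℕ} [hp : Fact p.Prime]

theorem iterate_verschiebung_add {R : Type*} [CommRing R] (n : ℕ) (x y : WittVector p R) :
    verschiebung^[n] (x + y) = verschiebung^[n] x + verschiebung^[n] y :=
  iterate_map_add verschiebung n x y

theorem iterate_verschiebung_sub {R : Type*} [CommRing R] (n : ℕ) (x y : WittVector p R) :
    verschiebung^[n] (x - y) = verschiebung^[n] x - verschiebung^[n] y :=
  iterate_map_sub verschiebung n x y

theorem frobenius_iterate_verschiebung {R : Type*} [CommRing R] [CharP R p] (n : ℕ)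
    (x : WittVector p R) :
    frobenius (verschiebung^[n] x) = verschiebung^[n] (frobenius x) :=
  ((verschiebung_frobenius_comm (p := p) (R := R)).iterate_left n x).symm

theorem iterate_verschiebung_intCast {R : Type*} [CommRing R] [CharP R p] (n : ℕ) (m : ℤ) :
    verschiebung^[n] (m : WittVector p R) = ((m * p ^ n : ℤ) : WittVector p R) := by
  have h := iterate_verschiebung_iterate_frobenius (p := p) (m : WittVector p R) n
  rw [Function.iterate_fixed (map_intCast (frobenius : WittVector p R →+* _) m)] at h
  rw [h]
  push_cast
  rfl

/-- A Witt vector with vanishing zeroth coefficient is in the image of Verschiebung. -/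
theorem exists_eq_verschiebung {R : Type*} [CommRing R] {x : WittVector p R}
    (hx : x.coeff 0 = 0) : ∃ y, x = verschiebung y :=
  ⟨_, eq_iterate_verschiebung (n := 1) fun i hi ↦ by rwa [Nat.lt_one_iff.mp hi]⟩

theorem sub_coeff_zero {R : Type*} [CommRing R] (x y : WittVector p R) :
    (x - y).coeff 0 = x.coeff 0 - y.coeff 0 :=
  map_sub (constantCoeff : WittVector p R →+* R) x y

theorem intCast_coeff_zero {R : Type*} [CommRing R] (m : ℤ) :
    (m : WittVector p R).coeff 0 = m :=
  map_intCast (constantCoeff : WittVector p R →+* R) m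

/-- Over a separably closed field of characteristic `p`, the Artin–Schreier–Witt equation
`F x - x = a` can be solved up to any precision. -/
theorem exists_frobenius_sub_self {S : Type*} [Field S] [CharP S p] [IsSepClosed S]
    (a : WittVector p S) (n : ℕ) :
    ∃ x b : WittVector p S, frobenius x - x = a + verschiebung^[n] b := by
  induction n with
  | zero => exact ⟨0, -a, by simp⟩
  | succ n ih =>
    obtain ⟨x, b, h⟩ := ih
    obtain ⟨t, ht⟩ := IsSepClosed.exists_root_C_mul_X_pow_add_C_mul_X_add_C' p p 1 (-1)
      (b.coeff 0) dvd_rfl hp.out.two_le (neg_ne_zero.mpr one_ne_zero)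
    obtain ⟨c, hc⟩ : ∃ c, frobenius (teichmuller p t) - teichmuller p t + b = verschiebung c := by
      apply exists_eq_verschiebung
      rw [add_coeff_zero, sub_coeff_zero, coeff_frobenius_charP, teichmuller_coeff_zero]
      linear_combination ht
    refine ⟨x + verschiebung^[n] (teichmuller p t), c, ?_⟩
    rw [Function.iterate_succ_apply, ← hc, iterate_verschiebung_add, iterate_verschiebung_sub,
      map_add, frobenius_iterate_verschiebung]
    linear_combination h

/-- In characteristic `p`, a Witt vector fixed by Frobenius up to precision `n` is an integer
up to precision `n`. -/
theorem exists_truncate_eq_intCast {S : Type*} [Field S] [CharP S p] {y : WittVector p S} {n : ℕ}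
    (hy : truncate n (frobenius y) = truncate n y) :
    ∃ m : ℤ, truncate n y = m := by
  rw [← sub_eq_zero, ← map_sub, ← RingHom.mem_ker, mem_ker_truncate] at hy
  suffices ∃ (m : ℤ) (w : WittVector p S), y = m + verschiebung^[n] w by
    obtain ⟨m, w, rfl⟩ := this
    refine ⟨m, ?_⟩
    rw [← map_intCast (truncate n : WittVector p S →+* _), ← sub_eq_zero, ← map_sub,
      ← RingHom.mem_ker, mem_ker_truncate]
    intro i hi
    rw [add_sub_cancel_left, iterate_verschiebung_coeff_eq_zero _ hi]
  induction n with
  | zero => exact ⟨0, y, by simp⟩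
  | succ n ih =>
    obtain ⟨m, w, rfl⟩ := ih fun i hi ↦ hy i (hi.trans n.lt_succ_self)
    have h := hy n n.lt_succ_self
    rw [map_add, map_intCast, add_sub_add_left_eq_sub, frobenius_iterate_verschiebung,
      ← iterate_verschiebung_sub] at h
    have h' := iterate_verschiebung_coeff (frobenius w - w) n 0
    rw [zero_add] at h'
    rw [h', sub_coeff_zero, coeff_frobenius_charP, sub_eq_zero,
      ← Subfield.mem_bot_iff_pow_eq_self S p, mem_bot_iff_intCast p] at h
    obtain ⟨l, hl⟩ := h
    obtain ⟨v, hv⟩ : ∃ v, w - (l : WittVector p S) = verschiebung v := by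
      apply exists_eq_verschiebung
      rw [sub_coeff_zero, intCast_coeff_zero, hl, sub_self]
    refine ⟨m + l * p ^ n, v, ?_⟩
    rw [Function.iterate_succ_apply, ← hv, iterate_verschiebung_sub, iterate_verschiebung_intCast]
    push_cast
    ring

theorem truncate_map_congr {R S : Type*} [CommRing R] [CommRing S] (f : R →+* S) {n : ℕ}
    {x y : WittVector p R} (h : truncate n x = truncate n y) :
    truncate n (map f x) = truncate n (map f y) := by
  ext i
  simpa [coeff_truncate, map_coeff] using congr_arg (fun z ↦ f (z.coeff i)) h

theorem natCast_pow_truncate_eq_zero {R : Type*} [CommRing R] [CharP R p] (n : ℕ) :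
    (p : TruncatedWittVector p n R) ^ n = 0 := by
  rw [← map_natCast (truncate n : WittVector p R →+* _), ← map_pow, ← RingHom.mem_ker,
    mem_ker_truncate]
  exact fun i hi ↦ coeff_p_pow_eq_zero p R hi.ne

theorem natCast_pow_truncate_succ_ne_zero {R : Type*} [CommRing R] [Nontrivial R] [CharP R p]
    (n : ℕ) : (p : TruncatedWittVector p (n + 1) R) ^ n ≠ 0 := by
  rw [← map_natCast (truncate (n + 1) : WittVector p R →+* _), ← map_pow, Ne, ← RingHom.mem_ker,
    mem_ker_truncate]
  intro h
  exact one_ne_zero ((coeff_p_pow p R n).symm.trans (h n n.lt_succ_self))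

end WittVector

section ArtinSchreierWitt

open WittVector

variable {p : ℕ} [hp : Fact p.Prime] {k S : Type*} [Field k] [Field S] [Algebra k S] [CharP S p]

/-- The defect `σ x - x` of a solution of an Artin–Schreier–Witt equation over `k` is an
integer. -/
theorem exists_truncate_map_sub_self {n : ℕ} {a : WittVector p k} {x : WittVector p S}
    (hx : truncate n (frobenius x - x) = truncate n (map (algebraMap k S) a)) (σ : Gal(S/k)) :
    ∃ m : ℤ, truncate n (map (σ : S →+* S) x - x) = m := by
  apply exists_truncate_eq_intCast
  have hcomm : frobenius (map (σ : S →+* S) x) = map (σ : S →+* S) (frobenius x) := by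
    ext i
    simp [coeff_frobenius_charP, map_coeff]
  have ha : map (σ : S →+* S) (map (algebraMap k S) a) = map (algebraMap k S) a := by
    ext i
    simp [map_coeff]
  have h := truncate_map_congr (σ : S →+* S) hx
  rw [ha, ← hx, map_sub] at h
  rw [map_sub, hcomm]
  simp only [map_sub] at h ⊢
  linear_combination h

/-- The character of the Galois group attached to a solution of an Artin–Schreier–Witt
equation. -/
noncomputable def artinSchreierWittHom {n : ℕ} {a : WittVector p k} {x : WittVector p S}
    (hx : truncate n (frobenius x - x) = truncate n (map (algebraMap k S) a)) :
    Gal(S/k) →* Multiplicative (TruncatedWittVector p n S) :=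
  MonoidHom.mk' (fun σ ↦ .ofAdd (truncate n (map (σ : S →+* S) x - x))) fun σ τ ↦ by
    obtain ⟨m, hm⟩ := exists_truncate_map_sub_self hx τ
    have hστ : map ((σ * τ : Gal(S/k)) : S →+* S) x =
        map (σ : S →+* S) (map (τ : S →+* S) x) := by
      ext i
      simp [map_coeff]
    have h := truncate_map_congr (σ : S →+* S)
      (hm.trans (map_intCast (truncate n : WittVector p S →+* _) m).symm)
    rw [map_intCast, map_intCast, ← hm, map_sub, ← hστ] at h
    rw [← ofAdd_add]
    refine congr_arg Multiplicative.ofAdd ?_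
    rw [← sub_add_sub_cancel _ (map (σ : S →+* S) x), map_add, h, add_comm]

theorem toAdd_artinSchreierWittHom {n : ℕ} {a : WittVector p k} {x : WittVector p S}
    (hx : truncate n (frobenius x - x) = truncate n (map (algebraMap k S) a)) (σ : Gal(S/k)) :
    (artinSchreierWittHom hx σ).toAdd = truncate n (map (σ : S →+* S) x - x) := rfl

/-- The field generated by the first `n` coefficients of a Witt vector. -/
def adjoinWittCoeff (k : Type*) {S : Type*} [Field k] [Field S] [Algebra k S] (n : ℕ)
    (x : WittVector p S) : IntermediateField k S :=
  adjoin k (x.coeff '' Set.Iio n)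

theorem ker_artinSchreierWittHom {n : ℕ} {a : WittVector p k} {x : WittVector p S}
    (hx : truncate n (frobenius x - x) = truncate n (map (algebraMap k S) a)) :
    (artinSchreierWittHom hx).ker = (adjoinWittCoeff k n x).fixingSubgroup := by
  ext σ
  rw [MonoidHom.mem_ker, ← toAdd_eq_zero, toAdd_artinSchreierWittHom, map_sub, sub_eq_zero,
    adjoinWittCoeff, ← Subgroup.zpowers_le, ← IntermediateField.le_iff_le, adjoin_le_iff]
  constructor
  · rintro h _ ⟨i, hi, rfl⟩
    rw [SetLike.mem_coe, mem_fixedField_iff]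
    intro τ hτ
    suffices Subgroup.zpowers σ ≤ MulAction.stabilizer Gal(S/k) (x.coeff i) from this hτ
    rw [Subgroup.zpowers_le, MulAction.mem_stabilizer_iff]
    simpa [coeff_truncate, map_coeff] using
      congr_arg (TruncatedWittVector.coeff (⟨i, hi⟩ : Fin n)) h
  · intro h
    ext i
    rw [coeff_truncate, coeff_truncate, map_coeff]
    exact (mem_fixedField_iff _ _).mp (h ⟨i, i.2, rfl⟩) σ (Subgroup.mem_zpowers σ)

/-- An automorphism moving the zeroth coefficient has a character value generating the
range. -/
theorem range_artinSchreierWittHom {n : ℕ} {a : WittVector p k} {x : WittVector p S}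
    (hx : truncate (n + 1) (frobenius x - x) = truncate (n + 1) (map (algebraMap k S) a))
    {σ : Gal(S/k)} (hσ : σ (x.coeff 0) ≠ x.coeff 0) :
    (artinSchreierWittHom hx).range = Subgroup.zpowers (artinSchreierWittHom hx σ) ∧
      orderOf (artinSchreierWittHom hx σ) = p ^ (n + 1) := by
  obtain ⟨m, hm⟩ := exists_truncate_map_sub_self hx σ
  have hm0 : ¬ (p : ℤ) ∣ m := by
    rw [← CharP.intCast_eq_zero_iff S p]
    intro h0
    rw [← map_intCast (truncate (n + 1) : WittVector p S →+* _)] at hm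
    have h := congr_arg (TruncatedWittVector.coeff 0) hm
    rw [coeff_truncate, coeff_truncate, Fin.val_zero, sub_coeff_zero, map_coeff,
      WittVector.intCast_coeff_zero, h0, sub_eq_zero] at h
    exact hσ h
  obtain ⟨u, v, huv⟩ : IsCoprime m ((p : ℤ) ^ (n + 1)) :=
    (((Nat.prime_iff_prime_int.mp hp.out).coprime_iff_not_dvd.mpr hm0).symm).pow_right
  have hmu : (u : TruncatedWittVector p (n + 1) S) * m = 1 := by
    have h := congr_arg (Int.cast : ℤ → TruncatedWittVector p (n + 1) S) huv
    push_cast at h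
    rwa [natCast_pow_truncate_eq_zero, mul_zero, add_zero] at h
  constructor
  · apply le_antisymm
    · rintro _ ⟨τ, rfl⟩
      obtain ⟨l, hl⟩ := exists_truncate_map_sub_self hx τ
      refine Subgroup.mem_zpowers_iff.mpr ⟨l * u, ?_⟩
      apply Multiplicative.toAdd.injective
      rw [toAdd_zpow, toAdd_artinSchreierWittHom, toAdd_artinSchreierWittHom, hm, hl,
        zsmul_eq_mul]
      push_cast
      rw [mul_assoc, hmu, mul_one]
    · rw [Subgroup.zpowers_le]
      exact ⟨σ, rfl⟩
  · apply orderOf_eq_prime_pow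
    · rw [← toAdd_eq_zero, toAdd_pow, toAdd_artinSchreierWittHom, hm, nsmul_eq_mul]
      intro h
      refine natCast_pow_truncate_succ_ne_zero (p := p) (R := S) n ?_
      push_cast at h
      linear_combination u * h - (p : TruncatedWittVector p (n + 1) S) ^ n * hmu
    · rw [← toAdd_eq_zero, toAdd_pow, toAdd_artinSchreierWittHom, hm, nsmul_eq_mul]
      push_cast
      rw [natCast_pow_truncate_eq_zero, zero_mul]

/-- Artin–Schreier–Witt extensions are cyclic, of the expected degree as soon as the zeroth
coefficient of the solution is moved by some automorphism `σ`. Moreover such a `σ` generates. -/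
theorem isCyclic_adjoinWittCoeff [IsGalois k S] {n : ℕ} {a : WittVector p k} {x : WittVector p S}
    (hx : truncate (n + 1) (frobenius x - x) = truncate (n + 1) (map (algebraMap k S) a))
    {σ : Gal(S/k)} (hσ : σ (x.coeff 0) ≠ x.coeff 0) :
    IsGalois k (adjoinWittCoeff k (n + 1) x) ∧
      Module.finrank k (adjoinWittCoeff k (n + 1) x) = p ^ (n + 1) ∧
      IsCyclic Gal(adjoinWittCoeff k (n + 1) x/k) ∧
      ∀ y ∈ adjoinWittCoeff k (n + 1) x, σ y = y → y ∈ Set.range (algebraMap k S) := by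
  have hker := ker_artinSchreierWittHom hx
  obtain ⟨hrange, horder⟩ := range_artinSchreierWittHom hx hσ
  set K := adjoinWittCoeff k (n + 1) x
  have hgal : IsGalois k K := by
    rw [← InfiniteGalois.normal_iff_isGalois, ← hker]
    infer_instance
  have hfin : FiniteDimensional k K := by
    have : Finite (x.coeff '' Set.Iio (n + 1)) := ((Set.finite_Iio _).image _).to_subtype
    exact finiteDimensional_adjoin fun y _ ↦ Algebra.IsIntegral.isIntegral y
  let e : Gal(K/k) ≃* Subgroup.zpowers (artinSchreierWittHom hx σ) :=
    (QuotientGroup.quotientKerEquivOfSurjective _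
        (AlgEquiv.restrictNormalHom_surjective (F := k) (K₁ := K) S)).symm.trans <|
      (QuotientGroup.quotientMulEquivOfEq (K.restrictNormalHom_ker.trans hker.symm)).trans <|
      (QuotientGroup.quotientKerEquivRange _).trans (MulEquiv.subgroupCongr hrange)
  refine ⟨hgal, ?_, ?_, fun y hy hσy ↦ ?_⟩
  · rw [← IsGalois.card_aut_eq_finrank, Nat.card_congr e.toEquiv, Nat.card_zpowers, horder]
  · exact isCyclic_of_surjective e.symm e.symm.surjective
  · rw [InfiniteGalois.mem_range_algebraMap_iff_fixed]
    intro τ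
    obtain ⟨l, hl⟩ : artinSchreierWittHom hx τ ∈
        Subgroup.zpowers (artinSchreierWittHom hx σ) := hrange ▸ ⟨τ, rfl⟩
    have hmem : (σ ^ l)⁻¹ * τ ∈ K.fixingSubgroup := by
      rw [← hker, MonoidHom.mem_ker, map_mul, map_inv, map_zpow, inv_mul_eq_one]
      exact hl
    have hpow : σ ^ l ∈ MulAction.stabilizer Gal(S/k) y :=
      zpow_mem (MulAction.mem_stabilizer_iff.mpr hσy) l
    have h : ((σ ^ l)⁻¹ * τ) • y = y := (mem_fixingSubgroup_iff _ _).mp hmem y hy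
    rw [mul_smul, inv_smul_eq_iff, MulAction.mem_stabilizer_iff.mp hpow] at h
    exact h

end ArtinSchreierWitt

section Constants

/-- The equation `t ^ p - t = z` has no solution in `C(z)` for `z` transcendental over `C`. -/
theorem pow_sub_self_ne_of_mem_adjoin_transcendental {C S : Type*} [Field C] [Field S] [Algebra C S]
    {z t : S} (hz : Transcendental C z) (ht : t ∈ C⟮z⟯) {n : ℕ} (hn : 2 ≤ n) :
    t ^ n - t ≠ z := by
  intro h
  obtain ⟨r, q, rfl⟩ := (mem_adjoin_simple_iff C t).mp ht
  have hinj : Function.Injective (aeval z : C[X] →ₐ[C] S) :=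
    transcendental_iff_injective.mp hz
  have hz0 : z ≠ 0 := by
    rintro rfl
    exact hz isAlgebraic_zero
  have hq : aeval z q ≠ 0 := by
    intro h0
    rw [h0, div_zero, zero_pow (by omega), sub_zero] at h
    exact hz0 h.symm
  have hq0 : q ≠ 0 := by
    rintro rfl
    simp at hq
  obtain ⟨m, rfl⟩ : ∃ m, n = m + 1 := ⟨n - 1, by omega⟩
  have heq : r ^ (m + 1) - r * q ^ m = X * q ^ (m + 1) := by
    apply hinj
    simp only [map_sub, map_mul, map_pow, aeval_X]
    calc _ = ((aeval z r / aeval z q) ^ (m + 1) - aeval z r / aeval z q) *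
          aeval z q ^ (m + 1) := by
            rw [div_pow]
            field_simp
            ring
      _ = _ := by rw [h]
  have hR : (X * q ^ (m + 1)).natDegree = (m + 1) * q.natDegree + 1 := by
    rw [natDegree_X_mul (pow_ne_zero _ hq0), natDegree_pow]
  have hL : (r * q ^ m).natDegree ≤ r.natDegree + m * q.natDegree :=
    natDegree_mul_le.trans (by rw [natDegree_pow])
  rcases le_or_gt r.natDegree q.natDegree with hle | hlt
  · have hsub := natDegree_sub_le (r ^ (m + 1)) (r * q ^ m)
    rw [heq, hR, natDegree_pow] at hsub
    have := Nat.mul_le_mul_left (m + 1) hle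
    rcases le_max_iff.mp hsub with h' | h' <;> nlinarith
  · have hsum := natDegree_add_le (X * q ^ (m + 1)) (r * q ^ m)
    rw [← heq, sub_add_cancel, heq, hR, natDegree_pow] at hsum
    rcases le_max_iff.mp hsum with h' | h' <;> nlinarith

/-- If `t ^ n - t = X` in a Galois extension of `F(X)`, then `t` is moved by an automorphism that
fixes all elements algebraic over `F`. -/
theorem RatFunc.exists_gal_fixing_constants {F S : Type*} [Field F] [Field S]
    [Algebra (RatFunc F) S] [Algebra F S] [IsScalarTower F (RatFunc F) S] [IsGalois (RatFunc F) S]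
    {t : S} {n : ℕ} (hn : 2 ≤ n) (ht : t ^ n - t = algebraMap (RatFunc F) S RatFunc.X) :
    ∃ σ : Gal(S/RatFunc F), (∀ y : S, IsAlgebraic F y → σ y = y) ∧ σ t ≠ t := by
  let C := algebraicClosure F S
  let z := algebraMap (RatFunc F) S RatFunc.X
  have hz : Transcendental C z := by
    have : Transcendental F z :=
      (transcendental_algebraMap_iff (algebraMap (RatFunc F) S).injective).mpr
        RatFunc.transcendental_X
    exact this.extendScalars C
  have hpoly (q : F[X]) : algebraMap (RatFunc F) S (algebraMap F[X] (RatFunc F) q) ∈ C⟮z⟯ := by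
    have h : algebraMap (RatFunc F) S (algebraMap F[X] (RatFunc F) q) =
        aeval z (q.map (algebraMap F C)) := by
      rw [aeval_map_algebraMap, ← RatFunc.aeval_X_left_eq_algebraMap, aeval_algebraMap_apply]
    rw [h]
    exact algebra_adjoin_le_adjoin C {z} (aeval_mem_adjoin_singleton C z)
  let L : IntermediateField (RatFunc F) S := C⟮z⟯.toSubfield.toIntermediateField fun f ↦ by
    rw [← RatFunc.num_div_denom f, map_div₀]
    exact div_mem (hpoly _) (hpoly _)
  have htL : t ∉ L := fun h ↦ pow_sub_self_ne_of_mem_adjoin_transcendental hz h hn ht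
  rw [← InfiniteGalois.fixedField_fixingSubgroup L, mem_fixedField_iff] at htL
  push Not at htL
  obtain ⟨σ, hσ, hσt⟩ := htL
  refine ⟨σ, fun y hy ↦ (mem_fixingSubgroup_iff _ _).mp hσ y ?_, hσt⟩
  exact C⟮z⟯.algebraMap_mem ⟨y, mem_algebraicClosure_iff.mpr hy⟩

end Constants

/-- For every prime `p` and `s ≥ 1` there is a cyclic Galois extension `K` of `F_p(Z)`
of degree `p^s` in which `F_p` is algebraically closed. -/
theorem stmt6 (p : ℕ) [Fact p.Prime] (s : ℕ) (hs : 1 ≤ s) :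
    ∃ (K : Type) (_ : Field K) (_ : Algebra (RatFunc (ZMod p)) K),
      IsGalois (RatFunc (ZMod p)) K ∧
      Module.finrank (RatFunc (ZMod p)) K = p ^ s ∧
      IsCyclic (K ≃ₐ[RatFunc (ZMod p)] K) ∧
      (∀ x : K,
        (∃ q : Polynomial (ZMod p), q ≠ 0 ∧
          Polynomial.eval₂
            ((algebraMap (RatFunc (ZMod p)) K).comp
              (algebraMap (ZMod p) (RatFunc (ZMod p)))) x q = 0) →
        x ∈ Set.range
          ((algebraMap (RatFunc (ZMod p)) K).comp
            (algebraMap (ZMod p) (RatFunc (ZMod p))))) := by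
  obtain ⟨n, rfl⟩ : ∃ n, s = n + 1 := ⟨s - 1, by omega⟩
  let k := RatFunc (ZMod p)
  let S := SeparableClosure k
  let a : WittVector p k := WittVector.teichmuller p RatFunc.X
  obtain ⟨x, b, hxb⟩ :=
    WittVector.exists_frobenius_sub_self (WittVector.map (algebraMap k S) a) (n + 1)
  have hx : WittVector.truncate (n + 1) (WittVector.frobenius x - x) =
      WittVector.truncate (n + 1) (WittVector.map (algebraMap k S) a) := by
    rw [← sub_eq_zero, ← map_sub, ← RingHom.mem_ker, WittVector.mem_ker_truncate, hxb,
      add_sub_cancel_left]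
    exact fun i hi ↦ WittVector.iterate_verschiebung_coeff_eq_zero _ hi
  have hx0 : x.coeff 0 ^ p - x.coeff 0 = algebraMap k S RatFunc.X := by
    have h := congr_arg (TruncatedWittVector.coeff 0) hx
    rwa [WittVector.coeff_truncate, WittVector.coeff_truncate, Fin.val_zero,
      WittVector.sub_coeff_zero, WittVector.coeff_frobenius_charP, WittVector.map_coeff,
      WittVector.teichmuller_coeff_zero] at h
  obtain ⟨σ, hσ, hσx⟩ :=
    RatFunc.exists_gal_fixing_constants (Fact.out : p.Prime).two_le hx0
  obtain ⟨hgal, hrank, hcyc, hfix⟩ := isCyclic_adjoinWittCoeff hx hσx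
  refine ⟨adjoinWittCoeff k (n + 1) x, inferInstance, inferInstance, hgal, hrank, hcyc, ?_⟩
  rintro y ⟨q, hq, hqy⟩
  have hy : IsAlgebraic (ZMod p) (y : S) := by
    refine ⟨q, hq, ?_⟩
    have h := congr_arg (algebraMap (adjoinWittCoeff k (n + 1) x) S) hqy
    rwa [hom_eval₂, map_zero] at h
  obtain ⟨f, hf⟩ := hfix y y.2 (hσ y hy)
  rw [← hf, isAlgebraic_algebraMap_iff (algebraMap k S).injective] at hy
  obtain ⟨c, rfl⟩ : ∃ c, f = RatFunc.C c := by
    by_contra hc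
    exact f.transcendental_of_ne_C hc hy
  exact ⟨c, Subtype.ext hf⟩
end

section
/- Let K be a field of characteristic p > 0 and let α ∈ K be such that the polynomial f(X) = X^p − X − α is irreducible over K. Let L = K[X]/(f) and let ω ∈ L be the image of X. Then the field trace satisfies Tr_{L/K}(ω^{p−1}) = −1. -/
open Polynomial

/-- In a power basis of dimension `n ≥ 2` whose generator satisfies `x ^ n = x + a`,
the trace of `x ^ (n - 1)` is `n - 1`. -/
theorem PowerBasis.trace_gen_pow_pred_of_gen_pow_eq {R S : Type*} [CommRing R] [CommRing S]
    [Algebra R S] (pb : PowerBasis R S) {n : ℕ} (hn : 2 ≤ n) (hdim : pb.dim = n) {a : R}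
    (hgen : pb.gen ^ n = pb.gen + algebraMap R S a) :
    Algebra.trace R S (pb.gen ^ (n - 1)) = (n : R) - 1 := by
  obtain ⟨m, rfl⟩ : ∃ m, n = m + 1 := ⟨n - 1, by omega⟩
  set b := pb.basis.reindex (finCongr hdim) with hb
  have hbi (i : Fin (m + 1)) : b i = pb.gen ^ (i : ℕ) := by simp [hb]
  have hzero : b.repr (pb.gen ^ m * b 0) 0 = 0 := by
    have : pb.gen ^ m * b 0 = b (Fin.last m) := by simp [hbi]
    rw [this, b.repr_self, Finsupp.single_eq_of_ne]
    simp only [ne_eq, Fin.ext_iff, Fin.val_zero, Fin.val_last]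
    omega
  have hsucc (i : Fin m) : b.repr (pb.gen ^ m * b i.succ) i.succ = 1 := by
    have : pb.gen ^ m * b i.succ = b i.succ + a • b i.castSucc := by
      simp only [hbi, Fin.val_succ, Fin.val_castSucc, Algebra.smul_def]
      linear_combination pb.gen ^ (i : ℕ) * hgen
    rw [this, map_add, map_smul, b.repr_self, b.repr_self, Finsupp.add_apply,
      Finsupp.smul_apply, Finsupp.single_eq_same, Finsupp.single_eq_of_ne]
    · simp
    · simp [Fin.ext_iff]
  rw [Algebra.trace_eq_matrix_trace b, Matrix.trace, Fin.sum_univ_succ]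
  simp only [Matrix.diag_apply, Algebra.leftMulMatrix_eq_repr_mul, Nat.add_sub_cancel, hzero, hsucc]
  simp

/-- If `K` has characteristic `p > 0` and `f = X^p − X − α` is irreducible over `K`,
then in `L = K[X]/(f)` the image `ω` of `X` satisfies `Tr_{L/K}(ω^{p−1}) = −1`. -/
theorem stmt7 {K : Type} [Field K] (p : ℕ) (hp : 0 < p) [CharP K p] (α : K)
    (hirr : Irreducible (X ^ p - X - C α : K[X])) :
    Algebra.trace K (AdjoinRoot (X ^ p - X - C α : K[X]))
      (AdjoinRoot.root (X ^ p - X - C α : K[X]) ^ (p - 1)) = -1 := by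
  have hp2 : 2 ≤ p := ((CharP.char_is_prime_or_zero K p).resolve_right hp.ne').two_le
  have hdeg : (X ^ p - X - C α : K[X]).natDegree = p := by
    rw [natDegree_sub_C, natDegree_sub_eq_left_of_natDegree_lt] <;> simp; omega
  have hroot := AdjoinRoot.eval₂_root (X ^ p - X - C α : K[X])
  simp only [eval₂_sub, eval₂_pow, eval₂_X, eval₂_C] at hroot
  have h := (AdjoinRoot.powerBasis hirr.ne_zero).trace_gen_pow_pred_of_gen_pow_eq (a := α) hp2
    (by rw [AdjoinRoot.powerBasis_dim, hdeg])
    (by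
      rw [AdjoinRoot.powerBasis_gen, AdjoinRoot.algebraMap_eq]
      linear_combination hroot)
  rw [AdjoinRoot.powerBasis_gen] at h
  rw [h, CharP.cast_eq_zero, zero_sub]
end

section
/- Let F′ be a field and d a positive integer. Define d₁ as follows: if char(F′) = 0 then d₁ = d; if char(F′) = p > 0 then d₁ is the p-free part of d, i.e., d = d₁ p^s with p ∤ d₁ and s ∈ ℕ. Assume F′ contains a primitive d₁-th root of unity. Then the rational function field F′(X) admits a field extension L such that L/F′(X) is Galois of degree d with cyclic Galois group. -/
open Polynomial

/-- `K` has a cyclic Galois extension of degree `n`. -/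
def HasCyclicExtension (K : Type) [Field K] (n : ℕ) : Prop :=
  ∃ (L : Type) (_ : Field L) (_ : Algebra K L),
    IsGalois K L ∧ Module.finrank K L = n ∧ IsCyclic (L ≃ₐ[K] L)

section ArtinSchreier

variable {L : Type*} [Field L]

theorem exists_natCast_eq_of_pow_char_eq_self (p : ℕ) [hp : Fact p.Prime] [CharP L p] {c : L}
    (hc : c ^ p = c) : ∃ k : ℕ, (k : L) = c := by
  rw [← Subfield.mem_bot_iff_pow_eq_self, ← ZMod.fieldRange_castHom_eq_bot p] at hc
  obtain ⟨z, rfl⟩ := hc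
  exact ⟨z.val, by rw [← map_natCast (ZMod.castHom (dvd_refl p) L), ZMod.natCast_zmod_val]⟩

theorem monic_X_pow_sub_X_sub_C {R : Type*} [CommRing R] [Nontrivial R] {p : ℕ} (hp : 1 < p)
    (a : R) : (X ^ p - X - C a : R[X]).Monic := by
  rw [sub_sub]
  refine monic_X_pow_sub (lt_of_eq_of_lt (degree_X_add_C a) ?_)
  exact_mod_cast hp

theorem natDegree_X_pow_sub_X_sub_C {R : Type*} [CommRing R] [Nontrivial R] {p : ℕ} (hp : 1 < p)
    (a : R) : (X ^ p - X - C a : R[X]).natDegree = p := by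
  rw [sub_sub, natDegree_sub_eq_left_of_natDegree_lt] <;>
    simp [hp]

/-- An Artin–Schreier polynomial without roots is irreducible. -/
theorem irreducible_X_pow_sub_X_sub_C (p : ℕ) [hp : Fact p.Prime] [CharP L p]
    {a : L} (ha : ∀ x : L, x ^ p - x ≠ a) : Irreducible (X ^ p - X - C a : L[X]) := by
  let Ω := AlgebraicClosure L
  have hchar : CharP Ω p := charP_of_injective_algebraMap (algebraMap L Ω).injective p
  have hmonic := monic_X_pow_sub_X_sub_C hp.out.one_lt a
  have hdeg := natDegree_X_pow_sub_X_sub_C hp.out.one_lt a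
  obtain ⟨θ, hθ⟩ := IsAlgClosed.exists_aeval_eq_zero Ω (X ^ p - X - C a : L[X])
    (by
      rw [degree_eq_natDegree hmonic.ne_zero, hdeg]
      exact_mod_cast hp.out.ne_zero)
  have hint : IsIntegral L θ := ⟨_, hmonic, hθ⟩
  have hdvd := minpoly.dvd L θ hθ
  have hroot {x : Ω} (hx : aeval x (minpoly L θ) = 0) : x ^ p - x = algebraMap L Ω a := by
    have := aeval_eq_zero_of_dvd_aeval_eq_zero hdvd hx
    simpa [sub_eq_zero] using this
  have hsep : (minpoly L θ).Separable := by
    refine Separable.of_dvd ?_ hdvd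
    rw [separable_def]
    have : derivative (X ^ p - X - C a : L[X]) = -1 := by simp [derivative_X_pow]
    rw [this]
    exact isCoprime_one_right.neg_right
  have hnot : θ ∉ (algebraMap L Ω).range := by
    rintro ⟨x, rfl⟩
    refine ha x ((algebraMap L Ω).injective ?_)
    simpa using hroot (minpoly.aeval L _)
  obtain ⟨θ', hne, hθ'⟩ : ∃ θ' : Ω, θ ≠ θ' ∧ IsConjRoot L θ θ' :=
    (notMem_iff_exists_ne_and_isConjRoot hsep (IsAlgClosed.splits _)).1 hnot
  obtain ⟨k, hk⟩ : ∃ k : ℕ, (k : Ω) = θ' - θ := by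
    refine exists_natCast_eq_of_pow_char_eq_self p ?_
    have h1 := hroot (minpoly.aeval L θ)
    have h2 := hroot hθ'.aeval_eq_zero
    rw [sub_pow_char]
    linear_combination h2 - h1
  have hconj (j : ℕ) : IsConjRoot L θ (θ + j * k) := by
    induction j with
    | zero => simpa using IsConjRoot.refl
    | succ j ih =>
      have h := IsConjRoot.add_algebraMap (j * k : L) hθ'
      refine ih.trans ?_
      simp only [map_mul, map_natCast] at h
      have heq : θ + ((j + 1 : ℕ) : Ω) * k = θ' + j * k := by
        push_cast
        linear_combination hk
      rwa [heq]
  have hk0 : (k : Ω) ≠ 0 := hk ▸ sub_ne_zero.2 hne.symm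
  have hcard : p ≤ (minpoly L θ).natDegree := by
    classical
    have hinj : Set.InjOn (fun j : ℕ ↦ θ + j * k) (Finset.range p) := by
      intro i hi j hj h
      have h' : (i : Ω) = j := mul_right_cancel₀ hk0 (add_left_cancel h)
      exact CharP.natCast_injOn_Iio Ω p (by simpa using hi) (by simpa using hj) h'
    have hsub : (Finset.range p).image (fun j : ℕ ↦ θ + j * k) ⊆
        ((minpoly L θ).aroots Ω).toFinset := by
      intro x hx
      obtain ⟨j, -, rfl⟩ := Finset.mem_image.1 hx
      rw [Multiset.mem_toFinset, mem_aroots]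
      exact ⟨minpoly.ne_zero hint, (hconj j).aeval_eq_zero⟩
    calc p = ((Finset.range p).image (fun j : ℕ ↦ θ + j * k)).card := by
          rw [Finset.card_image_of_injOn hinj, Finset.card_range]
      _ ≤ _ := Finset.card_le_card hsub
      _ ≤ _ := Multiset.toFinset_card_le _
      _ ≤ _ := card_roots' _
      _ = _ := natDegree_map _
  rw [eq_of_monic_of_dvd_of_natDegree_le (minpoly.monic hint) hmonic hdvd (hdeg.trans_le hcard)]
  exact minpoly.irreducible hint

end ArtinSchreier

section Cyclic

variable {K L : Type*} [Field K] [Field L] [Algebra K L] [FiniteDimensional K L]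

theorem trace_eq_sum_range_pow [IsGalois K L] {σ : Gal(L/K)}
    (hσ : ∀ τ, τ ∈ Subgroup.zpowers σ) (x : L) :
    algebraMap K L (Algebra.trace K L x) =
      ∑ i ∈ Finset.range (Module.finrank K L), (σ ^ i) x := by
  classical
  rw [trace_eq_sum_automorphisms, ← IsGalois.card_aut_eq_finrank,
    ← orderOf_eq_card_of_forall_mem_zpowers hσ, ← IsCyclic.image_range_orderOf hσ,
    Finset.sum_image]
  intro i hi j hj h
  exact pow_injOn_Iio_orderOf (by simpa using hi) (by simpa using hj) h

theorem mem_range_algebraMap_of_generator_apply_eq [IsGalois K L] {σ : Gal(L/K)}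
    (hσ : ∀ τ, τ ∈ Subgroup.zpowers σ) {x : L} (hx : σ x = x) :
    x ∈ Set.range (algebraMap K L) := by
  rw [IsGalois.mem_range_algebraMap_iff_fixed]
  intro τ
  have h : Subgroup.zpowers σ ≤ MulAction.stabilizer Gal(L/K) x :=
    (Subgroup.zpowers_le).2 hx
  exact h (hσ τ)

/-- The additive form of Hilbert's theorem 90. -/
theorem exists_sub_eq_of_trace_eq_zero [IsGalois K L] {σ : Gal(L/K)}
    (hσ : ∀ τ, τ ∈ Subgroup.zpowers σ) {x : L} (hx : Algebra.trace K L x = 0) :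
    ∃ y : L, σ y - y = x := by
  let δ : L →ₗ[K] L := σ.toLinearMap - LinearMap.id
  have hker : LinearMap.ker δ ≤ LinearMap.range (Algebra.linearMap K L) := fun y hy ↦
    mem_range_algebraMap_of_generator_apply_eq hσ (sub_eq_zero.1 (by simpa [δ] using hy))
  have hle : LinearMap.range δ ≤ LinearMap.ker (Algebra.trace K L) := by
    rintro _ ⟨y, rfl⟩
    simp [δ, Algebra.trace_eq_of_algEquiv]
  have h1 := LinearMap.finrank_range_add_finrank_ker δ
  have h2 := LinearMap.finrank_range_add_finrank_ker (Algebra.trace K L)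
  have h3 := Submodule.finrank_mono hker
  rw [LinearMap.finrank_range_of_inj (f := Algebra.linearMap K L) (algebraMap K L).injective] at h3
  rw [LinearMap.range_eq_top.2 (Algebra.trace_surjective K L), finrank_top] at h2
  have hx' : x ∈ LinearMap.range δ :=
    (Submodule.eq_of_le_of_finrank_le hle (by omega)).symm ▸ hx
  obtain ⟨y, hy⟩ := hx'
  exact ⟨y, by simpa [δ] using hy⟩

theorem isGalois_and_isCyclic_of_finrank_dvd_orderOf {σ : Gal(L/K)}
    (h : Module.finrank K L ∣ orderOf σ) : IsGalois K L ∧ IsCyclic Gal(L/K) := by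
  have hle : Nat.card Gal(L/K) ≤ Module.finrank K L := by
    rw [Nat.card_eq_fintype_card]
    exact AlgEquiv.card_le
  have hσ : orderOf σ ≤ Nat.card Gal(L/K) := orderOf_le_card
  have hσ' := Nat.le_of_dvd (orderOf_pos σ) h
  exact ⟨IsGalois.of_card_aut_eq_finrank K L (by omega),
    isCyclic_of_orderOf_eq_card σ (by omega)⟩

end Cyclic

/-- Albert's construction: a cyclic extension `L/K` with generator `σ` in characteristic `p` is
enlarged by a root of `X ^ p - X - a`, where `σ a - a = b ^ p - b` and `b` has trace `1`. -/
theorem HasCyclicExtension.of_artinSchreier {K L : Type} [Field K] [Field L] [Algebra K L]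
    [FiniteDimensional K L] [IsGalois K L] (p : ℕ) [hp : Fact p.Prime] [CharP L p]
    {σ : Gal(L/K)} (hσ : ∀ τ, τ ∈ Subgroup.zpowers σ) {a b : L}
    (hab : σ a - a = b ^ p - b) (hb : Algebra.trace K L b = 1) (ha : ∀ x : L, x ^ p - x ≠ a) :
    HasCyclicExtension K (Module.finrank K L * p) := by
  let f : L[X] := X ^ p - X - C a
  have hirr : Irreducible f := irreducible_X_pow_sub_X_sub_C p ha
  have : Fact (Irreducible f) := ⟨hirr⟩
  let M := AdjoinRoot f
  let θ : M := AdjoinRoot.root f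
  have hchar : CharP M p := charP_of_injective_algebraMap (algebraMap L M).injective p
  have hθ : θ ^ p - θ = algebraMap L M a := by
    have h := AdjoinRoot.eval₂_root f
    simp only [f, eval₂_sub, eval₂_X_pow, eval₂_X, eval₂_C] at h
    exact sub_eq_zero.1 h
  have : FiniteDimensional L M :=
    (AdjoinRoot.powerBasis hirr.ne_zero).finite
  have : FiniteDimensional K M := FiniteDimensional.trans K L M
  have hfin : Module.finrank K M = Module.finrank K L * p := by
    rw [← Module.finrank_mul_finrank K L M, (AdjoinRoot.powerBasis hirr.ne_zero).finrank,
      AdjoinRoot.powerBasis_dim, natDegree_X_pow_sub_X_sub_C hp.out.one_lt]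
  let i : L →ₐ[K] M := (IsScalarTower.toAlgHom K L M).comp σ.toAlgHom
  have hi (x : L) : i x = algebraMap L M (σ x) := rfl
  have hroot : f.eval₂ (i : L →+* M) (θ + algebraMap L M b) = 0 := by
    have h := congrArg (algebraMap L M) hab
    simp only [map_sub, map_pow] at h
    simp only [f, eval₂_sub, eval₂_X_pow, eval₂_X, eval₂_C, add_pow_char, RingHom.coe_coe, hi]
    linear_combination hθ - h
  let τ₀ : M →ₐ[K] M := AdjoinRoot.liftAlgHom f i (θ + algebraMap L M b) hroot
  let τ : Gal(M/K) := AlgEquiv.ofBijective τ₀ (Algebra.IsAlgebraic.algHom_bijective τ₀)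
  have hτL (x : L) : τ (algebraMap L M x) = algebraMap L M (σ x) :=
    AdjoinRoot.liftAlgHom_of f i _ hroot x
  have hτθ : τ θ = θ + algebraMap L M b := AdjoinRoot.liftAlgHom_root f i _ hroot
  have hpowL (m : ℕ) (x : L) : (τ ^ m) (algebraMap L M x) = algebraMap L M ((σ ^ m) x) := by
    induction m with
    | zero => simp
    | succ m ih => rw [pow_succ', pow_succ', AlgEquiv.mul_apply, ih, hτL, AlgEquiv.mul_apply]
  have hpowθ (m : ℕ) : (τ ^ m) θ = θ + algebraMap L M (∑ j ∈ Finset.range m, (σ ^ j) b) := by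
    induction m with
    | zero => simp
    | succ m ih =>
      rw [pow_succ, AlgEquiv.mul_apply, hτθ, map_add, ih, hpowL, Finset.sum_range_succ, map_add,
        add_assoc]
  have hfull : (τ ^ Module.finrank K L) θ = θ + 1 := by
    rw [hpowθ, ← trace_eq_sum_range_pow hσ, hb, map_one, map_one]
  have hfullpow (k : ℕ) : ((τ ^ Module.finrank K L) ^ k) θ = θ + k := by
    induction k with
    | zero => simp
    | succ k ih =>
      rw [pow_succ, AlgEquiv.mul_apply, hfull, map_add, ih, map_one, Nat.cast_succ, add_assoc]
  have hdvd : Module.finrank K M ∣ orderOf τ := by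
    have hσpow : σ ^ orderOf τ = 1 := by
      ext x
      apply (algebraMap L M).injective
      rw [← hpowL, pow_orderOf_eq_one]
      rfl
    have hn : Module.finrank K L ∣ orderOf τ := by
      rw [← IsGalois.card_aut_eq_finrank, ← orderOf_eq_card_of_forall_mem_zpowers hσ]
      exact orderOf_dvd_of_pow_eq_one hσpow
    obtain ⟨k, hk⟩ := hn
    have h := hfullpow k
    rw [← pow_mul, ← hk, pow_orderOf_eq_one, AlgEquiv.one_apply, left_eq_add,
      CharP.cast_eq_zero_iff M p] at h
    rw [hfin, hk]
    exact Nat.mul_dvd_mul_left _ h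
  obtain ⟨h1, h2⟩ := isGalois_and_isCyclic_of_finrank_dvd_orderOf hdvd
  exact ⟨M, inferInstance, inferInstance, h1, hfin, h2⟩

/-- If `K` has characteristic `p` and `x ^ p - x = a` has no solution in `K`, then cyclic
extensions of degree `n` yield cyclic extensions of degree `n * p`. -/
theorem HasCyclicExtension.mul_char {K : Type} [Field K] (p : ℕ) [hp : Fact p.Prime] [CharP K p]
    {a : K} (ha : ∀ x : K, x ^ p - x ≠ a) {n : ℕ} (hn : n ≠ 0) (h : HasCyclicExtension K n) :
    HasCyclicExtension K (n * p) := by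
  obtain ⟨L, _, _, _, rfl, hcyc⟩ := h
  have : FiniteDimensional K L := FiniteDimensional.of_finrank_pos (Nat.pos_of_ne_zero hn)
  have hchar : CharP L p := charP_of_injective_algebraMap (algebraMap K L).injective p
  obtain ⟨σ, hσ⟩ := hcyc.exists_generator
  have htrace (x : L) : Algebra.trace K L (σ x) = Algebra.trace K L x :=
    Algebra.trace_eq_of_algEquiv σ x
  have htraceNat (k : ℕ) : Algebra.trace K L k = Module.finrank K L * k := by
    rw [← map_natCast (algebraMap K L), Algebra.trace_algebraMap, nsmul_eq_mul]
  by_cases hpn : p ∣ Module.finrank K L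
  · have hn0 : (Module.finrank K L : K) = 0 := (CharP.cast_eq_zero_iff K p _).2 hpn
    obtain ⟨b, hb⟩ := Algebra.trace_surjective K L 1
    have htracePow : Algebra.trace K L (b ^ p - b) = 0 := by
      apply (algebraMap K L).injective
      rw [map_sub, map_sub, trace_eq_sum_range_pow hσ]
      simp_rw [map_pow]
      rw [← sum_pow_char, ← trace_eq_sum_range_pow hσ, hb]
      simp
    obtain ⟨y, hy⟩ := exists_sub_eq_of_trace_eq_zero hσ htracePow
    refine .of_artinSchreier p hσ hy hb fun x hx ↦ ?_
    obtain ⟨k, hk⟩ : ∃ k : ℕ, (k : L) = σ x - x - b := by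
      refine exists_natCast_eq_of_pow_char_eq_self p ?_
      have hx' := congrArg σ hx
      rw [map_sub, map_pow] at hx'
      rw [sub_pow_char, sub_pow_char]
      linear_combination hx' - hx + hy
    have h := congrArg (Algebra.trace K L) hk
    rw [htraceNat, hn0, map_sub, map_sub, htrace, hb] at h
    simp at h
  · have hn0 : (Module.finrank K L : K) ≠ 0 := fun h ↦ hpn ((CharP.cast_eq_zero_iff K p _).1 h)
    have hinv : ((Module.finrank K L : K)⁻¹) ^ p = (Module.finrank K L : K)⁻¹ := by
      rw [inv_pow, ← frobenius_def, map_natCast]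
    refine .of_artinSchreier p hσ (a := algebraMap K L a)
      (b := algebraMap K L (Module.finrank K L : K)⁻¹) ?_ ?_ fun x hx ↦ ?_
    · rw [← map_pow, hinv, σ.commutes, sub_self, sub_self]
    · rw [Algebra.trace_algebraMap, nsmul_eq_mul, mul_inv_cancel₀ hn0]
    obtain ⟨k, hk⟩ : ∃ k : ℕ, (k : L) = σ x - x := by
      refine exists_natCast_eq_of_pow_char_eq_self p ?_
      have hx' := congrArg σ hx
      rw [map_sub, map_pow, σ.commutes] at hx'
      rw [sub_pow_char]
      linear_combination hx' - hx
    have h := congrArg (Algebra.trace K L) hk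
    rw [htraceNat, map_sub, htrace, sub_self, mul_eq_zero, or_iff_right hn0] at h
    have hk0 : (k : L) = 0 := by rw [← map_natCast (algebraMap K L), h, map_zero]
    obtain ⟨z, rfl⟩ := mem_range_algebraMap_of_generator_apply_eq hσ
      (sub_eq_zero.1 (hk.symm.trans hk0))
    exact ha z ((algebraMap K L).injective (by simpa using hx))

section RatFunc

variable {F : Type*} [Field F]

theorem irreducible_X_pow_sub_C_ratFunc_X {n : ℕ} (hn : n ≠ 0) :
    Irreducible (X ^ n - C RatFunc.X : (RatFunc F)[X]) := by
  have hmap : (X ^ n - C RatFunc.X : (RatFunc F)[X]) =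
      (X ^ n - C X : F[X][X]).map (algebraMap F[X] (RatFunc F)) := by simp
  have hm : (X ^ n - C X : F[X][X]).Monic := monic_X_pow_sub_C _ hn
  have hP : (Ideal.span {(X : F[X])}).IsPrime := (Ideal.span_singleton_prime X_ne_zero).2 prime_X
  rw [hmap, ← hm.irreducible_iff_irreducible_map_fraction_map]
  refine IsEisensteinAt.irreducible (𝓟 := Ideal.span {X}) ⟨?_, ?_, ?_⟩ hP hm.isPrimitive
    (by rw [natDegree_X_pow_sub_C]; exact Nat.pos_of_ne_zero hn)
  · rw [hm.leadingCoeff]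
    exact fun h ↦ hP.ne_top ((Ideal.eq_top_iff_one _).2 h)
  · intro k hk
    rw [natDegree_X_pow_sub_C] at hk
    rw [coeff_sub, coeff_X_pow, if_neg hk.ne, zero_sub, coeff_C, Ideal.neg_mem_iff]
    split_ifs <;> simp
  · rw [coeff_sub, coeff_X_pow, if_neg hn.symm, zero_sub, coeff_C_zero, Ideal.neg_mem_iff,
      Ideal.span_singleton_pow, Ideal.mem_span_singleton, X_pow_dvd_iff]
    exact fun h ↦ by simpa using h 1 (by norm_num)

theorem pow_sub_self_ne_ratFunc_X {p : ℕ} (hp : 1 < p) (x : RatFunc F) :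
    x ^ p - x ≠ RatFunc.X := by
  intro h
  obtain ⟨y, rfl, -⟩ := exists_integer_of_is_root_of_monic
    (monic_X_pow_sub_X_sub_C hp (X : F[X])) (r := x) (by simp [h])
  rw [← RatFunc.algebraMap_X, ← map_pow, ← map_sub] at h
  have h := RatFunc.algebraMap_injective F h
  by_cases hy : natDegree y = 0
  · obtain ⟨c, rfl⟩ := natDegree_eq_zero.1 hy
    rw [← C_pow, ← C_sub] at h
    simpa using congrArg natDegree h
  · have hlt : y.natDegree < p * y.natDegree := lt_mul_left (Nat.pos_of_ne_zero hy) hp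
    have hdeg : (y ^ p - y).natDegree = p * y.natDegree := by
      rw [natDegree_sub_eq_left_of_natDegree_lt] <;> rw [natDegree_pow]
      exact hlt
    rw [h, natDegree_X] at hdeg
    omega

end RatFunc

theorem HasCyclicExtension.ratFunc_of_isPrimitiveRoot {F : Type} [Field F] {n : ℕ} (hn : n ≠ 0)
    {ζ : F} (hζ : IsPrimitiveRoot ζ n) : HasCyclicExtension (RatFunc F) n := by
  have hirr : Irreducible (X ^ n - C RatFunc.X : (RatFunc F)[X]) :=
    irreducible_X_pow_sub_C_ratFunc_X hn
  have : NeZero n := ⟨hn⟩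
  have hprim : (primitiveRoots n (RatFunc F)).Nonempty :=
    ⟨_, (mem_primitiveRoots (Nat.pos_of_ne_zero hn)).2
      (hζ.map_of_injective (algebraMap F (RatFunc F)).injective)⟩
  exact ⟨SplittingField (X ^ n - C RatFunc.X : (RatFunc F)[X]), inferInstance, inferInstance,
    isGalois_of_isSplittingField_X_pow_sub_C hprim hirr _,
    finrank_of_isSplittingField_X_pow_sub_C hprim hirr _,
    isCyclic_of_isSplittingField_X_pow_sub_C hprim hirr _⟩


/-- Let `F′` be a field, `d ≥ 1`, and `d₁` the `p`-free part of `d` (with `d₁ = d` in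
characteristic `0`). If `F′` contains a primitive `d₁`-th root of unity, then `F′(X)` has
a cyclic Galois extension of degree `d`. -/
theorem stmt9 {F' : Type} [Field F'] (d d₁ : ℕ) (hd : 0 < d)
    (hchar0 : ringChar F' = 0 → d₁ = d)
    (hcharp : ∀ p : ℕ, p.Prime → ringChar F' = p →
      ∃ s : ℕ, d = d₁ * p ^ s ∧ ¬ p ∣ d₁)
    (ζ : F') (hζ : IsPrimitiveRoot ζ d₁) :
    ∃ (L : Type) (_ : Field L) (_ : Algebra (RatFunc F') L),
      IsGalois (RatFunc F') L ∧
      Module.finrank (RatFunc F') L = d ∧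
      IsCyclic (L ≃ₐ[RatFunc F'] L) := by

  have hd₁ : d₁ ≠ 0 := by
    rintro rfl
    rcases CharP.char_is_prime_or_zero F' (ringChar F') with hp | h0
    · obtain ⟨s, hs, -⟩ := hcharp _ hp rfl
      omega
    · exact hd.ne (hchar0 h0)
  have hbase : HasCyclicExtension (RatFunc F') d₁ := .ratFunc_of_isPrimitiveRoot hd₁ hζ
  rcases CharP.char_is_prime_or_zero F' (ringChar F') with hp | h0
  · obtain ⟨s, rfl, -⟩ := hcharp _ hp rfl
    have : Fact (ringChar F').Prime := ⟨hp⟩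
    have : CharP (RatFunc F') (ringChar F') :=
      charP_of_injective_algebraMap (algebraMap F' (RatFunc F')).injective _
    change HasCyclicExtension _ _
    clear hd hchar0 hcharp
    induction s with
    | zero => simpa using hbase
    | succ s ih =>
      rw [pow_succ, ← mul_assoc]
      exact ih.mul_char _ (pow_sub_self_ne_ratFunc_X hp.one_lt)
        (mul_ne_zero hd₁ (pow_ne_zero _ hp.ne_zero))
  · exact hchar0 h0 ▸ hbase
end

section
/- (Data reduction.) Let F be a field and K an extension field of F. Let B₁, …, B_m ∈ M(k×ℓ, F) and let S ⊆ F be a finite subset with |S| ≥ r + 1. If there exist a′₁, …, a′_m ∈ K such that the matrix Σᵢ a′ᵢ Bᵢ ∈ M(k×ℓ, K) has rank at least r, then there exist a₁, …, a_m ∈ S such that the matrix Σᵢ aᵢ Bᵢ ∈ M(k×ℓ, F) has rank at least r. -/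
open Matrix

/-- A matrix of rank at least `r` has `r` linearly independent rows. -/
theorem Matrix.exists_linearIndependent_row_of_le_rank {K m n : Type*} [Field K] [Finite m]
    [Fintype n] (A : Matrix m n K) {r : ℕ} (h : r ≤ A.rank) :
    ∃ e : Fin r → m, LinearIndependent K (A.submatrix e id).row := by
  rw [A.rank_eq_finrank_span_row] at h
  obtain ⟨f, hf, -, hli⟩ := Submodule.exists_fun_fin_finrank_span_eq K (Set.range A.row)
  choose e he using hf
  refine ⟨fun i ↦ e (Fin.castLE h i), ?_⟩
  have hrow : (A.submatrix (fun i ↦ e (Fin.castLE h i)) id).row = f ∘ Fin.castLE h :=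
    funext fun i ↦ he _
  rw [hrow]
  exact hli.comp _ (Fin.castLE_injective h)

/-- A matrix of rank at least `r` has a nonvanishing `r × r` minor. -/
theorem Matrix.exists_det_submatrix_ne_zero_of_le_rank {K m n : Type*} [Field K] [Finite m]
    [Fintype n] (A : Matrix m n K) {r : ℕ} (h : r ≤ A.rank) :
    ∃ (e : Fin r → m) (f : Fin r → n), (A.submatrix e f).det ≠ 0 := by
  obtain ⟨e, he⟩ := A.exists_linearIndependent_row_of_le_rank h
  have hr : r ≤ (A.submatrix e id)ᵀ.rank := by
    rw [rank_transpose, he.rank_matrix, Fintype.card_fin]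
  obtain ⟨f, hf⟩ := (A.submatrix e id)ᵀ.exists_linearIndependent_row_of_le_rank hr
  refine ⟨e, f, ?_⟩
  have hu := (isUnit_iff_isUnit_det _).1 (linearIndependent_rows_iff_isUnit.1 hf)
  rw [← det_transpose]
  exact hu.ne_zero

/-- The determinant of a matrix of polynomials of total degree at most one has total degree at
most the size of the matrix. -/
theorem MvPolynomial.totalDegree_det_le {R σ n : Type*} [CommRing R] [Fintype n] [DecidableEq n]
    (A : Matrix n n (MvPolynomial σ R)) (hA : ∀ i j, (A i j).totalDegree ≤ 1) :
    A.det.totalDegree ≤ Fintype.card n := by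
  rw [det_apply]
  refine (totalDegree_finsetSum _ _).trans (Finset.sup_le fun τ _ ↦ ?_)
  rw [Units.smul_def]
  refine (totalDegree_smul_le _ _).trans ((totalDegree_finsetProd _ _).trans ?_)
  exact (Finset.sum_le_sum fun i _ ↦ hA _ i).trans (by simp)

/-- Data reduction: if some `K`-linear combination of the matrices `B₁, …, B_m` over `F`
has rank at least `r` (over an extension field `K` of `F`), then some linear combination
with coefficients from any prescribed subset `S ⊆ F` of size at least `r + 1` has rank
at least `r`. -/
theorem stmt10 {F K : Type} [Field F] [Field K] [Algebra F K]
    {k l m : ℕ} (B : Fin m → Matrix (Fin k) (Fin l) F)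
    (S : Finset F) (r : ℕ) (hS : r + 1 ≤ S.card)
    (a' : Fin m → K)
    (h : r ≤ (∑ i, a' i • (B i).map (algebraMap F K)).rank) :
    ∃ a : Fin m → F, (∀ i, a i ∈ S) ∧ r ≤ (∑ i, a i • B i).rank := by
  obtain ⟨e, f, hdet⟩ := Matrix.exists_det_submatrix_ne_zero_of_le_rank _ h
  let P : Matrix (Fin r) (Fin r) (MvPolynomial (Fin m) F) :=
    .of fun x y ↦ ∑ i, MvPolynomial.C (B i (e x) (f y)) * MvPolynomial.X i
  have hP : P.det ≠ 0 := by
    intro h0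
    apply hdet
    rw [← map_zero (MvPolynomial.aeval a' : MvPolynomial (Fin m) F →ₐ[F] K), ← h0, AlgHom.map_det]
    congr 1
    ext x y
    simp [P, Matrix.sum_apply, mul_comm]
  have hdeg : P.det.totalDegree ≤ r := by
    refine (MvPolynomial.totalDegree_det_le P fun x y ↦ ?_).trans (by simp)
    simp only [P, Matrix.of_apply]
    refine (MvPolynomial.totalDegree_finsetSum _ _).trans (Finset.sup_le fun i _ ↦ ?_)
    exact (MvPolynomial.totalDegree_mul _ _).trans (by simp)
  by_contra! hlow
  refine hP (MvPolynomial.eq_zero_of_eval_zero_at_prod_finset _ (fun _ ↦ S) (fun i ↦ ?_)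
    fun a ha ↦ ?_)
  · have := MvPolynomial.degreeOf_le_totalDegree P.det i
    lia
  · by_contra hne
    refine (hlow a ha).not_ge ?_
    have heval : (MvPolynomial.eval a).mapMatrix P = (∑ i, a i • B i).submatrix e f := by
      ext x y
      simp [P, Matrix.sum_apply, mul_comm]
    rw [RingHom.map_det, heval] at hne
    calc r = ((∑ i, a i • B i).submatrix e f).rank := by simp [rank_of_det_ne_zero hne]
      _ ≤ _ := rank_submatrix_le _ e f
end
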